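/- arXiv:2204.12465 — 2 statements merged into one kernel-verified Lean document; each statement's English description precedes it below -/
import Mathlib

section
/- Let α > 0. If G is a graph with n vertices and average degree at least α·n, then G contains a copy of TK_r^(1), where r := α·n^{1/2}/2. -/
open scoped BigOperators

/-- The average degree of a graph `G`: `(1/|G|) * sum of degrees`. -/
noncomputable def avgDeg {V : Type*} (G : SimpleGraph V) : Real :=
  (finsum fun v : V => ((G.neighborSet v).ncard : Real)) / (Nat.card V : Real)

/-- `S` is the vertex set of a copy of `TK_t^(l)` in `G`: a balanced subdivision of the
complete graph `K_t` in which each edge is replaced by a path with `l` internal vertices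
(i.e. of length `l + 1`); the paths are pairwise internally vertex disjoint. -/
def IsTK {V : Type*} (G : SimpleGraph V) (t l : Nat) (S : Set V) : Prop :=
  ∃ b : Fin t → V, Function.Injective b ∧
    ∃ P : ∀ i j : Fin t, i < j → G.Walk (b i) (b j),
      (∀ i j (h : i < j), (P i j h).IsPath) ∧
      (∀ i j (h : i < j), (P i j h).length = l + 1) ∧
      (∀ i j (h : i < j), ∀ i' j' (h' : i' < j'), (i, j) ≠ (i', j') →
        ∀ v : V, v ∈ (P i j h).support → v ∈ (P i' j' h').support →
          (v = b i ∨ v = b j) ∧ (v = b i' ∨ v = b j')) ∧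
      S = {v : V | ∃ (i j : Fin t) (h : i < j), v ∈ (P i j h).support}

/-- `G` contains a copy of `TK_t^(l)`. -/
def HasTK {V : Type*} (G : SimpleGraph V) (t l : Nat) : Prop :=
  ∃ S : Set V, IsTK G t l S

/-!
If `G` has `n` vertices and more than `s * n ^ (3 / 2)` edges, then it contains a copy of
`TK_(s+1)^(1)`. Some cut `(A, B)` contains half of the edges. Give each pair `P ⊆ A` the weight
`1 / codeg P`, where `codeg P` counts the common neighbours of `P` in `B`: each pair has total
weight at most `1` over all the neighbourhoods `N(v) ∩ A`, `v ∈ B`, while by convexity these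
contain many pairs. Hence in some `N(v) ∩ A` the average weight of a pair is at most
`1 / (s + 1).choose 2`, and by averaging it contains `s + 1` vertices spanning total weight at
most `1`. This is enough for Hall's condition, so that distinct pairs of these vertices can be
joined through distinct vertices of `B`.
-/

section

open Finset

variable {𝕜 : Type*} [Field 𝕜] [LinearOrder 𝕜] [IsStrictOrderedRing 𝕜]

section Finsets

variable {α : Type*}

lemma sum_sum_powersetCard_erase [DecidableEq α] {M : Type*} [AddCommMonoid M] (w : Finset α → M)
    (N : Finset α) (k : ℕ) :
    ∑ x ∈ N, ∑ P ∈ (N.erase x).powersetCard k, w P = (#N - k) • ∑ P ∈ N.powersetCard k, w P := by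
  have swap : ∑ x ∈ N, ∑ P ∈ (N.erase x).powersetCard k, w P
      = ∑ P ∈ N.powersetCard k, ∑ _x ∈ N \ P, w P := by
    refine sum_comm' fun x P => ?_
    simp only [mem_powersetCard, subset_erase, mem_sdiff]
    tauto
  rw [swap, smul_sum]
  refine sum_congr rfl fun P hP => ?_
  obtain ⟨hPN, rfl⟩ := mem_powersetCard.1 hP
  rw [sum_const, card_sdiff_of_subset hPN]

lemma exists_mem_sum_powersetCard_erase_le [DecidableEq α] (w : Finset α → 𝕜) {N : Finset α}
    (hN : N.Nonempty) {k : ℕ} {κ : 𝕜} (h : ∑ P ∈ N.powersetCard k, w P ≤ κ * (#N).choose k) :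
    ∃ x ∈ N, ∑ P ∈ (N.erase x).powersetCard k, w P ≤ κ * (#N - 1).choose k := by
  have choose_eq : (#N - 1).choose k * #N = (#N).choose k * (#N - k) := by
    obtain ⟨m, hm⟩ := Nat.exists_eq_succ_of_ne_zero hN.card_pos.ne'
    rw [hm]
    exact Nat.choose_mul_succ_eq m k
  apply exists_le_of_sum_le hN
  calc ∑ x ∈ N, ∑ P ∈ (N.erase x).powersetCard k, w P
      = (#N - k : ℕ) * ∑ P ∈ N.powersetCard k, w P := by
        rw [sum_sum_powersetCard_erase, nsmul_eq_mul]
    _ ≤ (#N - k : ℕ) * (κ * (#N).choose k) := by gcongr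
    _ = κ * ((#N).choose k * (#N - k) : ℕ) := by push_cast; ring
    _ = ∑ _x ∈ N, κ * (#N - 1).choose k := by
        rw [← choose_eq, sum_const, nsmul_eq_mul]; push_cast; ring

lemma exists_subset_card_eq_sum_powersetCard_le (w : Finset α → 𝕜) {N : Finset α} {k t : ℕ}
    {κ : 𝕜} (ht : t ≤ #N) (h : ∑ P ∈ N.powersetCard k, w P ≤ κ * (#N).choose k) :
    ∃ T ⊆ N, #T = t ∧ ∑ P ∈ T.powersetCard k, w P ≤ κ * t.choose k := by
  classical
  induction N using Finset.strongInduction with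
  | H N ih =>
    obtain rfl | hlt := ht.eq_or_lt
    · exact ⟨N, Subset.rfl, rfl, h⟩
    obtain ⟨x, hx, hle⟩ :=
      exists_mem_sum_powersetCard_erase_le w (card_pos.1 (by omega)) h
    rw [← card_erase_of_mem hx] at hle
    obtain ⟨T, hTN, hT⟩ := ih _ (erase_ssubset hx) (by rw [card_erase_of_mem hx]; omega) hle
    exact ⟨T, hTN.trans (erase_subset x N), hT⟩

lemma exists_injective_of_sum_inv_card_le_one {ι : Type*} [Fintype ι] (F : ι → Finset α)
    (hF : ∀ i, (F i).Nonempty) (hsum : ∑ i, (#(F i) : 𝕜)⁻¹ ≤ 1) :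
    ∃ f : ι → α, f.Injective ∧ ∀ i, f i ∈ F i := by
  classical
  refine (all_card_le_biUnion_card_iff_exists_injective F).1 fun s => ?_
  obtain rfl | ⟨i₀, hi₀⟩ := s.eq_empty_or_nonempty
  · simp
  have hpos : 0 < #(s.biUnion F) := ((hF i₀).mono (subset_biUnion_of_mem F hi₀)).card_pos
  have hle : (#s : 𝕜) * (#(s.biUnion F) : 𝕜)⁻¹ ≤ 1 :=
    calc (#s : 𝕜) * (#(s.biUnion F) : 𝕜)⁻¹
        = ∑ _i ∈ s, (#(s.biUnion F) : 𝕜)⁻¹ := by rw [sum_const, nsmul_eq_mul]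
      _ ≤ ∑ i ∈ s, (#(F i) : 𝕜)⁻¹ := sum_le_sum fun i hi =>
          inv_anti₀ (mod_cast (hF i).card_pos) (mod_cast card_le_card (subset_biUnion_of_mem F hi))
      _ ≤ ∑ i, (#(F i) : 𝕜)⁻¹ :=
          sum_le_univ_sum_of_nonneg fun i => inv_nonneg.2 (Nat.cast_nonneg _)
      _ ≤ 1 := hsum
  rw [← div_eq_mul_inv, div_le_one (mod_cast hpos)] at hle
  exact_mod_cast hle

end Finsets

section Subdivision

variable {V : Type*} {G : SimpleGraph V} {t l : ℕ}

lemma hasTK_of_le_one (ht : t ≤ 1) (b : Fin t → V) : HasTK G t l := by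
  have := Fin.subsingleton_iff_le_one.2 ht
  have not_lt (i j : Fin t) : ¬ i < j := fun h => h.ne (Subsingleton.elim i j)
  exact ⟨_, b, Function.injective_of_subsingleton b, fun i j h => (not_lt i j h).elim,
    fun i j h => (not_lt i j h).elim, fun i j h => (not_lt i j h).elim,
    fun i j h => (not_lt i j h).elim, rfl⟩

lemma hasTK_one_of_midpoints {b : Fin t → V} (hb : b.Injective) (m : ∀ i j : Fin t, i < j → V)
    (hmb : ∀ i j h k, m i j h ≠ b k) (hleft : ∀ i j h, G.Adj (b i) (m i j h))
    (hright : ∀ i j h, G.Adj (m i j h) (b j))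
    (hm : ∀ i j h i' j' h', m i j h = m i' j' h' → (i, j) = (i', j')) : HasTK G t 1 := by
  refine ⟨_, b, hb, fun i j h => .cons (hleft i j h) (.cons (hright i j h) .nil), ?_, ?_, ?_, rfl⟩
  · intro i j h
    simp [SimpleGraph.Walk.cons_isPath_iff, hmb, (hmb i j h i).symm, hb.ne h.ne]
  · intro i j h
    simp
  · intro i j h i' j' h' hne v hv hv'
    simp only [SimpleGraph.Walk.support_cons, SimpleGraph.Walk.support_nil, List.mem_cons,
      List.not_mem_nil, or_false] at hv hv'
    grind

lemma hasTK_one_of_injective_pairs {T : Finset V} {m : T.powersetCard 2 → V}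
    (hm : m.Injective) (hmT : ∀ P, m P ∉ T) (hadj : ∀ P, ∀ x ∈ P.1, G.Adj (m P) x) :
    HasTK G #T 1 := by
  classical
  let b (i : Fin #T) : V := T.equivFin.symm i
  have hbT (i : Fin #T) : b i ∈ T := (T.equivFin.symm i).2
  have hb : b.Injective := Subtype.val_injective.comp T.equivFin.symm.injective
  let pair (i j : Fin #T) (h : i < j) : T.powersetCard 2 :=
    ⟨{b i, b j}, mem_powersetCard.2
      ⟨insert_subset (hbT i) (singleton_subset_iff.2 (hbT j)), card_pair (hb.ne h.ne)⟩⟩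
  refine hasTK_one_of_midpoints hb (fun i j h => m (pair i j h))
    (fun i j h k heq => hmT _ (heq ▸ hbT k)) (fun i j h => (hadj _ _ (by simp [pair])).symm)
    (fun i j h => hadj _ _ (by simp [pair])) fun i j h i' j' h' heq => ?_
  have pair_eq : ({b i, b j} : Finset V) = {b i', b j'} := congrArg Subtype.val (hm heq)
  rw [← coe_inj, coe_pair, coe_pair, Set.pair_eq_pair_iff, hb.eq_iff, hb.eq_iff, hb.eq_iff,
    hb.eq_iff] at pair_eq
  grind

end Subdivision

section Bipartite

variable {V : Type*} (G : SimpleGraph V) [DecidableRel G.Adj]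

/-- The common neighbourhood inside `B` of the vertices of `P`. It is a `Finset` restricted to `B`,
and allows sets `P` of any size, as opposed to `SimpleGraph.commonNeighbors`. -/
def commonNbhd (B P : Finset V) : Finset V := {u ∈ B | ∀ x ∈ P, G.Adj u x}

lemma sum_sum_inv_card_commonNbhd_le (A B : Finset V) (k : ℕ) :
    ∑ v ∈ B, ∑ P ∈ {x ∈ A | G.Adj v x}.powersetCard k, (#(commonNbhd G B P) : 𝕜)⁻¹
      ≤ (#A).choose k := by
  have swap : ∑ v ∈ B, ∑ P ∈ {x ∈ A | G.Adj v x}.powersetCard k, (#(commonNbhd G B P) : 𝕜)⁻¹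
      = ∑ P ∈ A.powersetCard k, ∑ _v ∈ commonNbhd G B P, (#(commonNbhd G B P) : 𝕜)⁻¹ := by
    refine sum_comm' fun v P => ?_
    simp only [commonNbhd, mem_powersetCard, mem_filter, subset_iff]
    grind
  calc ∑ v ∈ B, ∑ P ∈ {x ∈ A | G.Adj v x}.powersetCard k, (#(commonNbhd G B P) : 𝕜)⁻¹
      ≤ ∑ _P ∈ A.powersetCard k, (1 : 𝕜) := by
        rw [swap]
        refine sum_le_sum fun P _ => ?_
        rw [sum_const, nsmul_eq_mul]
        exact mul_inv_le_one
    _ = (#A).choose k := by rw [sum_const, card_powersetCard, nsmul_one]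

variable {G} {A B : Finset V} {s : ℕ}

lemma hasTK_one_of_sum_inv_card_commonNbhd_le_one {T : Finset V} (hTB : Disjoint T B)
    (hne : ∀ P ∈ T.powersetCard 2, (commonNbhd G B P).Nonempty)
    (hsum : ∑ P ∈ T.powersetCard 2, (#(commonNbhd G B P) : 𝕜)⁻¹ ≤ 1) : HasTK G #T 1 := by
  rw [← sum_coe_sort] at hsum
  obtain ⟨m, hm, hmem⟩ := exists_injective_of_sum_inv_card_le_one
    (fun P : T.powersetCard 2 => commonNbhd G B P) (fun P => hne P P.2) hsum
  exact hasTK_one_of_injective_pairs hm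
    (fun P => disjoint_right.1 hTB (mem_filter.1 (hmem P)).1) fun P => (mem_filter.1 (hmem P)).2

lemma exists_mul_sum_inv_card_commonNbhd_add_lt {c r : 𝕜} (hc : 0 ≤ c) {k : ℕ}
    (h : c * (#A).choose k + #B * r < ∑ v ∈ B, ((#{x ∈ A | G.Adj v x}).choose k : 𝕜)) :
    ∃ v ∈ B, c * ∑ P ∈ {x ∈ A | G.Adj v x}.powersetCard k, (#(commonNbhd G B P) : 𝕜)⁻¹ + r
      < (#{x ∈ A | G.Adj v x}).choose k := by
  refine exists_lt_of_sum_lt (lt_of_le_of_lt ?_ h)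
  rw [sum_add_distrib, ← mul_sum, sum_const, nsmul_eq_mul]
  gcongr
  exact sum_sum_inv_card_commonNbhd_le G A B k

/- The term `#B * s.choose 2` makes sure that the neighbourhood found by averaging has more than
`s` vertices. -/
lemma hasTK_one_of_lt_sum_choose_two (hAB : Disjoint A B)
    (h : (s + 1).choose 2 * (#A).choose 2 + #B * s.choose 2
      < ∑ v ∈ B, (#{x ∈ A | G.Adj v x}).choose 2) :
    HasTK G (s + 1) 1 := by
  let N (v : V) : Finset V := {x ∈ A | G.Adj v x}
  let W (S : Finset V) : ℝ := ∑ P ∈ S.powersetCard 2, (#(commonNbhd G B P) : ℝ)⁻¹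
  obtain ⟨v, hvB, hv⟩ : ∃ v ∈ B,
      ((s + 1).choose 2 : ℝ) * W (N v) + s.choose 2 < (#(N v)).choose 2 :=
    exists_mul_sum_inv_card_commonNbhd_add_lt (Nat.cast_nonneg _) (mod_cast h)
  have hW : 0 ≤ W (N v) := sum_nonneg fun P _ => inv_nonneg.2 (Nat.cast_nonneg _)
  have hchoose : s.choose 2 < (#(N v)).choose 2 := by
    have : (s.choose 2 : ℝ) < (#(N v)).choose 2 :=
      (le_add_of_nonneg_left (by positivity)).trans_lt hv
    exact_mod_cast this
  have hcard : s + 1 ≤ #(N v) :=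
    lt_of_not_ge fun hle => (Nat.choose_le_choose 2 hle).not_gt hchoose
  have hpos : (0 : ℝ) < (#(N v)).choose 2 := mod_cast Nat.zero_lt_of_lt hchoose
  obtain ⟨T, hTN, hTcard, hWT⟩ : ∃ T ⊆ N v, #T = s + 1 ∧
      W T ≤ W (N v) / (#(N v)).choose 2 * (s + 1).choose 2 :=
    exists_subset_card_eq_sum_powersetCard_le _ hcard (div_mul_cancel₀ _ hpos.ne').ge
  rw [← hTcard]
  refine hasTK_one_of_sum_inv_card_commonNbhd_le_one
    (hAB.mono_left (hTN.trans (filter_subset _ A))) (fun P hP => ⟨v, ?_⟩) (hWT.trans ?_)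
  · exact mem_filter.2
      ⟨hvB, fun x hx => (mem_filter.1 (hTN ((mem_powersetCard.1 hP).1 hx))).2⟩
  · rw [div_mul_eq_mul_div, div_le_one hpos, mul_comm]
    exact (le_add_of_nonneg_right (Nat.cast_nonneg _)).trans hv.le

/- Here `a`, `b` and `e` stand for `#A`, `#B` and the number of edges between `A` and `B`. By
Cauchy-Schwarz, the conclusion bounds the bracket by the sum of the squared degrees, which is what
`hasTK_one_of_lt_sum_choose_two` needs. -/
lemma mul_add_lt_sq_of_lt_four_mul_sq {s a b e : 𝕜} (hs : 1 ≤ s) (ha : 0 ≤ a) (hb : 0 ≤ b)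
    (he₀ : 0 ≤ e) (he : e ≤ a * b) (h : s ^ 2 * (a + b) ^ 3 < 4 * e ^ 2) :
    b * ((s + 1) * s / 2 * a ^ 2 + b * (s * (s - 1)) + e) < e ^ 2 := by
  have amgm : a * b ≤ (a + b) ^ 2 / 4 := by nlinarith [sq_nonneg (a - b)]
  have four_le : 4 ≤ a + b := by
    refine (lt_of_mul_lt_mul_right ?_ (by positivity : 0 ≤ (a + b) ^ 3)).le
    calc 4 * (a + b) ^ 3 = 4 * (1 ^ 2 * (a + b) ^ 3) := by ring
      _ ≤ 4 * (s ^ 2 * (a + b) ^ 3) := by gcongr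
      _ < 4 * (4 * e ^ 2) := by gcongr
      _ ≤ 4 * (4 * ((a + b) ^ 2 / 4) ^ 2) := by gcongr; exact he.trans amgm
      _ = (a + b) * (a + b) ^ 3 := by ring
  have b_le : b ≤ (a + b) ^ 2 / 4 := by nlinarith
  have le_first : (s + 2) / 2 * (a * b) ≤ (s + 1) * ((a + b) ^ 2 / 4) := by gcongr; linarith
  have le_second : s * b ≤ (s + 1) * ((a + b) ^ 2 / 4) := by gcongr; linarith
  calc b * ((s + 1) * s / 2 * a ^ 2 + b * (s * (s - 1)) + e)
      ≤ b * ((s + 1) * s / 2 * a ^ 2 + b * (s * (s - 1)) + a * b) := by gcongr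
    _ = a * b * (a + b) + (s - 1) * ((s + 2) / 2 * (a * b) * a + s * b * b) := by ring
    _ ≤ (a + b) ^ 2 / 4 * (a + b) + (s - 1) * ((s + 1) * ((a + b) ^ 2 / 4) * a
          + (s + 1) * ((a + b) ^ 2 / 4) * b) := by
        have := sub_nonneg.2 hs
        gcongr
    _ = s ^ 2 * (a + b) ^ 3 / 4 := by ring
    _ < e ^ 2 := by linarith

lemma hasTK_one_of_lt_sum_card_sq (hAB : Disjoint A B)
    (h : s ^ 2 * (#A + #B) ^ 3 < 4 * (∑ v ∈ B, #{x ∈ A | G.Adj v x}) ^ 2) :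
    HasTK G (s + 1) 1 := by
  obtain rfl | hs := s.eq_zero_or_pos
  · obtain ⟨v, -⟩ : B.Nonempty := by
      rw [nonempty_iff_ne_empty]
      rintro rfl
      simp at h
    exact hasTK_of_le_one le_rfl fun _ => v
  apply hasTK_one_of_lt_sum_choose_two hAB
  let d (v : V) : ℕ := #{x ∈ A | G.Adj v x}
  have sum_le : ∑ v ∈ B, d v ≤ #A * #B := by
    rw [mul_comm]
    exact sum_le_card_nsmul B d #A fun v _ => card_filter_le A _
  have lt_sum_sq : (s + 1) * s / 2 * (#A : ℝ) ^ 2 + #B * (s * (s - 1)) + ∑ v ∈ B, (d v : ℝ)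
      < ∑ v ∈ B, (d v : ℝ) ^ 2 := by
    refine lt_of_mul_lt_mul_left (lt_of_lt_of_le ?_ sq_sum_le_card_mul_sum_sq) (Nat.cast_nonneg #B)
    exact mul_add_lt_sq_of_lt_four_mul_sq (mod_cast hs) (Nat.cast_nonneg _) (Nat.cast_nonneg _)
      (by positivity) (mod_cast sum_le) (mod_cast h)
  have sum_choose : ∑ v ∈ B, ((d v).choose 2 : ℝ)
      = (∑ v ∈ B, (d v : ℝ) ^ 2 - ∑ v ∈ B, (d v : ℝ)) / 2 := by
    rw [← sum_sub_distrib, sum_div]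
    exact sum_congr rfl fun v _ => by rw [Nat.cast_choose_two]; ring
  have cast_lt : ((s + 1).choose 2 : ℝ) * (#A).choose 2 + #B * s.choose 2
      < ∑ v ∈ B, ((d v).choose 2 : ℝ) := by
    have : (0 : ℝ) ≤ (s + 1) * s * #A := by positivity
    rw [sum_choose, Nat.cast_choose_two, Nat.cast_choose_two, Nat.cast_choose_two]
    push_cast
    linarith
  exact_mod_cast cast_lt

end Bipartite

section Cut

variable {V : Type*} [Fintype V] [DecidableEq V]

lemma four_mul_card_filter_notMem_mem {x y : V} (hxy : x ≠ y) :
    4 * #{A : Finset V | x ∉ A ∧ y ∈ A} = 2 ^ Fintype.card V := by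
  have eq_Icc : ({A : Finset V | x ∉ A ∧ y ∈ A} : Finset (Finset V)) = Icc {y} {x}ᶜ := by
    ext A
    simp [and_comm]
  have one_lt : 1 < Fintype.card V := Fintype.one_lt_card_iff.2 ⟨x, y, hxy⟩
  rw [eq_Icc, card_Icc_finset (by simpa using hxy), card_compl, card_singleton,
    card_singleton, show 4 = 2 ^ 2 from rfl, ← pow_add]
  congr 1
  omega

variable (G : SimpleGraph V) [DecidableRel G.Adj]

lemma four_mul_sum_sum_card_filter_adj :
    4 * ∑ A : Finset V, ∑ v ∈ Aᶜ, #{x ∈ A | G.Adj v x}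
      = 2 ^ Fintype.card V * (2 * #G.edgeFinset) := by
  have swap : ∑ A : Finset V, ∑ v ∈ Aᶜ, #{x ∈ A | G.Adj v x}
      = ∑ v, ∑ x ∈ G.neighborFinset v, #{A : Finset V | v ∉ A ∧ x ∈ A} := by
    simp only [card_eq_sum_ones]
    rw [sum_comm' (t' := univ) (s' := fun v => {A : Finset V | v ∉ A}) (by simp)]
    refine sum_congr rfl fun v _ => sum_comm' fun A x => ?_
    simp only [mem_filter, mem_univ, true_and, SimpleGraph.mem_neighborFinset]
    tauto
  rw [swap, mul_sum, ← G.sum_degrees_eq_twice_card_edges, mul_sum]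
  refine sum_congr rfl fun v _ => ?_
  rw [mul_sum, sum_congr rfl fun x hx =>
    four_mul_card_filter_notMem_mem ((G.mem_neighborFinset v x).1 hx).ne, sum_const, smul_eq_mul,
    G.card_neighborFinset_eq_degree, mul_comm]

lemma exists_card_edgeFinset_le_two_mul_cut :
    ∃ A : Finset V, #G.edgeFinset ≤ 2 * ∑ v ∈ Aᶜ, #{x ∈ A | G.Adj v x} := by
  obtain ⟨A, -, hA⟩ : ∃ A ∈ (univ : Finset (Finset V)),
      2 * #G.edgeFinset ≤ 4 * ∑ v ∈ Aᶜ, #{x ∈ A | G.Adj v x} := by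
    apply exists_le_of_sum_le univ_nonempty
    rw [← mul_sum _ _ 4, four_mul_sum_sum_card_filter_adj, sum_const, card_univ,
      Fintype.card_finset, smul_eq_mul]
  exact ⟨A, by omega⟩

end Cut

section Edges

variable {V : Type*} (G : SimpleGraph V)

theorem hasTK_one_of_lt_card_edgeFinset_sq [Fintype V] [DecidableRel G.Adj] {s : ℕ}
    (h : s ^ 2 * Fintype.card V ^ 3 < #G.edgeFinset ^ 2) : HasTK G (s + 1) 1 := by
  classical
  obtain ⟨A, hA⟩ := exists_card_edgeFinset_le_two_mul_cut G
  refine hasTK_one_of_lt_sum_card_sq (disjoint_compl_right (a := A)) ?_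
  calc s ^ 2 * (#A + #Aᶜ) ^ 3 = s ^ 2 * Fintype.card V ^ 3 := by rw [card_add_card_compl]
    _ < #G.edgeFinset ^ 2 := h
    _ ≤ (2 * ∑ v ∈ Aᶜ, #{x ∈ A | G.Adj v x}) ^ 2 := by gcongr
    _ = 4 * (∑ v ∈ Aᶜ, #{x ∈ A | G.Adj v x}) ^ 2 := by ring

lemma natCard_mul_avgDeg [Fintype V] [DecidableRel G.Adj] :
    Nat.card V * avgDeg G = 2 * #G.edgeFinset := by
  classical
  have sum_ncard : ∑ᶠ v : V, ((G.neighborSet v).ncard : ℝ) = 2 * #G.edgeFinset := by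
    rw [finsum_eq_sum_of_fintype]
    simp only [Set.ncard_eq_toFinset_card', ← SimpleGraph.neighborFinset_def,
      G.card_neighborFinset_eq_degree]
    exact_mod_cast G.sum_degrees_eq_twice_card_edges
  rw [avgDeg, sum_ncard]
  cases isEmpty_or_nonempty V
  · simp [G.edgeFinset_eq_empty.2 (Subsingleton.elim G ⊥)]
  · exact mul_div_cancel₀ _ (Nat.cast_ne_zero.2 Nat.card_pos.ne')

theorem hasTK_one_of_lt_avgDeg [Finite V] {s : ℕ}
    (h : 2 * s * √(Nat.card V) < avgDeg G) : HasTK G (s + 1) 1 := by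
  classical
  have := Fintype.ofFinite V
  have card_pos : (0 : ℝ) < Nat.card V := by
    refine Nat.cast_pos.2 (Nat.pos_of_ne_zero fun hV => ?_)
    rw [avgDeg, hV, Nat.cast_zero, Real.sqrt_zero, mul_zero, div_zero] at h
    exact h.false
  have lt_edges : s * √(Nat.card V) * Nat.card V < #G.edgeFinset := by
    have := mul_lt_mul_of_pos_left h card_pos
    rw [natCard_mul_avgDeg] at this
    linarith
  apply hasTK_one_of_lt_card_edgeFinset_sq
  rw [← Nat.card_eq_fintype_card]
  suffices (s : ℝ) ^ 2 * (Nat.card V : ℝ) ^ 3 < (#G.edgeFinset : ℝ) ^ 2 from mod_cast this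
  calc (s : ℝ) ^ 2 * (Nat.card V : ℝ) ^ 3
      = (s * √(Nat.card V) * Nat.card V) ^ 2 := by
        rw [mul_pow, mul_pow, Real.sq_sqrt card_pos.le]
        ring
    _ < (#G.edgeFinset : ℝ) ^ 2 := by gcongr

end Edges

end

theorem statement_6 {V : Type*} [Fintype V] (alpha : Real) (halpha : 0 < alpha)
    (G : SimpleGraph V) (n : Nat) (hn : Nat.card V = n)
    (hdeg : alpha * (n : Real) ≤ avgDeg G) :
    HasTK G ⌈alpha * Real.sqrt n / 2⌉₊ 1 := by
  rcases ht : ⌈alpha * √n / 2⌉₊ with _ | s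
  · exact hasTK_of_le_one zero_le_one Fin.elim0
  have hs : (s : ℝ) < alpha * √n / 2 := Nat.lt_ceil.1 (by omega)
  have sqrt_pos : 0 < √(n : ℝ) := by
    refine (Real.sqrt_nonneg _).lt_of_ne' fun h => ?_
    simp [h, (Nat.cast_nonneg s).not_gt] at hs
  apply hasTK_one_of_lt_avgDeg
  calc 2 * s * √(Nat.card V) < 2 * (alpha * √n / 2) * √n := by rw [hn]; gcongr
    _ = alpha * n := by
        rw [mul_div_cancel₀ _ two_ne_zero, mul_assoc, Real.mul_self_sqrt n.cast_nonneg]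
    _ ≤ avgDeg G := hdeg
end

section
/- For each 0 < ε₁, ε₂ < 1 the following holds for all sufficiently large K. Let G be an n-vertex bipartite (ε₁, ε₂·d)-expander with minimum degree δ(G) ≥ d, n ≥ K·d and d ≥ log^{800} n. Then G contains a copy of TK_{√d}^(ℓ) for some ℓ ∈ ℕ. -/
open scoped BigOperators

/-- The function `eps(x, eps1, k)` from the definition of robust sublinear expanders. -/
noncomputable def epsFun (eps1 k x : Real) : Real :=
  if x < k / 5 then 0 else eps1 / (Real.log (15 * x / k)) ^ 2

/-- The external neighbourhood of a vertex set `X` in a graph `H`. -/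
def extNbr {V : Type*} (H : SimpleGraph V) (X : Set V) : Set V :=
  {w : V | w ∉ X ∧ ∃ v ∈ X, H.Adj v w}

/-- `G` is an `(eps1, k)`-robust-expander. -/
def IsExpander {V : Type*} (G : SimpleGraph V) (eps1 k : Real) : Prop :=
  ∀ X : Set V, k / 2 ≤ (X.ncard : Real) → (X.ncard : Real) ≤ (Nat.card V : Real) / 2 →
    ∀ F : SimpleGraph V, F ≤ G →
      (F.edgeSet.ncard : Real) ≤ avgDeg G * epsFun eps1 k (X.ncard) * (X.ncard : Real) →
      epsFun eps1 k (X.ncard) * (X.ncard : Real) ≤ ((extNbr (G \ F) X).ncard : Real)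

/-- The minimum degree of `G` is at least `d`. -/
def minDegGe {V : Type*} (G : SimpleGraph V) (d : Real) : Prop :=
  ∀ v : V, d ≤ ((G.neighborSet v).ncard : Real)

/-- `G` is bipartite with parts `A` and its complement. -/
def IsBipartiteWith {V : Type*} (G : SimpleGraph V) (A : Set V) : Prop :=
  ∀ ⦃v w : V⦄, G.Adj v w → (v ∈ A ↔ w ∉ A)

/-- `G` is bipartite. -/
def IsBipartite {V : Type*} (G : SimpleGraph V) : Prop :=
  ∃ A : Set V, IsBipartiteWith G A

/-!
The expansion of `G` is used only to connect large sets: two sets on one side of the bipartition,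
each of size about `d` times a power of `L ~ log² (n / d)`, are joined by a path of a prescribed
even length that avoids a given set of slightly smaller size. To find the path, a front is grown
from each set. In each step a few well chosen vertices of the current layer dominate many new
vertices, because otherwise the last two layers would violate robust expansion. Growing only two
layers at a time keeps the fronts on known sides of the bipartition, and this parity fixes the
length of the path exactly.

A single vertex has too few neighbours to be connected in this way, so each of the `√d` branch
vertices is made the core of a spider: `3√d` legs of equal length that end in stars, the leaves of
which form a set large enough to be connected. Spiders are obtained by joining big stars to small
ones and applying the pigeonhole principle, and then the pairs of spiders are connected greedily,
each time through a pair of legs not used before.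
-/

open Finset

section Covering

variable {α β : Type*} {r : α → β → Prop} [∀ a b, Decidable (r a b)]
  {B : Finset α} {T : Finset β} {D : ℝ}

lemma exists_card_filter_not_le (hB : B.Nonempty) (hT : ∀ w ∈ T, D ≤ #(B.bipartiteBelow r w)) :
    ∃ b ∈ B, (#{w ∈ T | ¬ r b w} : ℝ) ≤ #T * Real.exp (-(D / #B)) := by
  have hB0 : (0 : ℝ) < #B := by exact_mod_cast hB.card_pos
  have hsum : D * #T ≤ ∑ b ∈ B, (#(T.bipartiteAbove r b) : ℝ) := by
    rw [← Nat.cast_sum, sum_card_bipartiteAbove_eq_sum_card_bipartiteBelow, Nat.cast_sum, mul_comm,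
      ← nsmul_eq_mul]
    exact card_nsmul_le_sum T _ D hT
  obtain ⟨b, hb, hbT⟩ : ∃ b ∈ B, D * #T / #B ≤ #(T.bipartiteAbove r b) :=
    exists_le_of_sum_le hB <| by rwa [sum_const, nsmul_eq_mul, mul_div_cancel₀ _ hB0.ne']
  have hsplit : (#(T.bipartiteAbove r b) : ℝ) + #{w ∈ T | ¬ r b w} = #T := by
    exact_mod_cast card_filter_add_card_filter_not (s := T) (r b)
  refine ⟨b, hb, ?_⟩
  calc (#{w ∈ T | ¬ r b w} : ℝ) ≤ #T * (-(D / #B) + 1) := by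
        linarith [show (#T : ℝ) * (-(D / #B) + 1) = #T - D * #T / #B by ring]
    _ ≤ #T * Real.exp (-(D / #B)) := by gcongr; exact Real.add_one_le_exp _

lemma exists_subset_card_uncovered_le (hB : B.Nonempty)
    (hT : ∀ w ∈ T, D ≤ #(B.bipartiteBelow r w)) (m : ℕ) :
    ∃ A ⊆ B, #A ≤ m ∧ (#{w ∈ T | ∀ a ∈ A, ¬ r a w} : ℝ) ≤ #T * Real.exp (-(D / #B)) ^ m := by
  classical
  induction m with
  | zero => exact ⟨∅, by simp⟩
  | succ m ih =>
    obtain ⟨A, hAB, hAm, hA⟩ := ih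
    obtain ⟨b, hb, hbA⟩ := exists_card_filter_not_le (r := r)
      (T := {w ∈ T | ∀ a ∈ A, ¬ r a w}) hB fun w hw => hT w (mem_filter.1 hw).1
    refine ⟨insert b A, insert_subset hb hAB, (card_insert_le _ _).trans (by lia), ?_⟩
    have hfilter : {w ∈ T | ∀ a ∈ insert b A, ¬ r a w}
        = {w ∈ {w ∈ T | ∀ a ∈ A, ¬ r a w} | ¬ r b w} := by
      ext w
      simp only [mem_filter, forall_mem_insert]
      tauto
    rw [hfilter, pow_succ, ← mul_assoc]
    exact hbA.trans (by gcongr)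

lemma exists_subset_covering (hD : 0 < D) (hT : ∀ w ∈ T, D ≤ #(B.bipartiteBelow r w)) :
    ∃ A ⊆ B, (#A : ℝ) ≤ #B * Real.log #T / D + 1 ∧ ∀ w ∈ T, ∃ a ∈ A, r a w := by
  set q := #B * Real.log #T / D with hq
  have hq0 : 0 ≤ q := div_nonneg (mul_nonneg (Nat.cast_nonneg _) (Real.log_natCast_nonneg _)) hD.le
  obtain rfl | ⟨w₀, hw₀⟩ := T.eq_empty_or_nonempty
  · exact ⟨∅, by simp, by simpa using by positivity, by simp⟩
  have hT0 : (0 : ℝ) < #T := by exact_mod_cast card_pos.2 ⟨w₀, hw₀⟩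
  have hB0 : (0 : ℝ) < #B := hD.trans_le <| (hT w₀ hw₀).trans <| by
    exact_mod_cast card_le_card (filter_subset _ _)
  obtain ⟨A, hAB, hAq, hA⟩ := exists_subset_card_uncovered_le
    (card_pos.1 (by exact_mod_cast hB0)) hT (⌊q⌋₊ + 1)
  have hlt : (#T : ℝ) * Real.exp (-(D / #B)) ^ (⌊q⌋₊ + 1) < 1 := by
    have hlog : Real.log #T < (↑(⌊q⌋₊ + 1) : ℝ) * (D / #B) := by
      rw [show Real.log #T = q * (D / #B) by rw [hq]; field_simp]
      exact mul_lt_mul_of_pos_right (by exact_mod_cast Nat.lt_floor_add_one q) (div_pos hD hB0)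
    rw [← Real.exp_nat_mul, ← Real.exp_log hT0, ← Real.exp_add, Real.exp_lt_one_iff]
    linarith
  have hnone : {w ∈ T | ∀ a ∈ A, ¬ r a w} = ∅ := by
    rw [← card_eq_zero, ← Nat.lt_one_iff]
    exact_mod_cast hA.trans_lt hlt
  refine ⟨A, hAB, ?_, fun w hw => ?_⟩
  · calc (#A : ℝ) ≤ (⌊q⌋₊ + 1 : ℕ) := by exact_mod_cast hAq
      _ ≤ q + 1 := by push_cast; linarith [Nat.floor_le hq0]
  · simpa using filter_eq_empty_iff.1 hnone hw

lemma exists_subset_covering_part {s y : ℝ} (hBs : (#B : ℝ) ≤ s) (hy : 1 ≤ y) (hys : y ≤ 2 * s)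
    (hT : ∀ w ∈ T, ∃ b ∈ B, r b w) :
    ∃ A ⊆ B, (#A : ℝ) ≤ y ∧ #T * y / (4 * s) ≤ (#{w ∈ T | ∃ a ∈ A, r a w} : ℝ) := by
  obtain rfl | hB := B.eq_empty_or_nonempty
  · obtain rfl : T = ∅ := eq_empty_of_forall_notMem fun w hw => by simpa using hT w hw
    exact ⟨∅, by simp, by simpa using by linarith, by simp⟩
  have hB0 : (0 : ℝ) < #B := by exact_mod_cast hB.card_pos
  obtain ⟨A, hAB, hAy, hA⟩ := exists_subset_card_uncovered_le (T := T) (r := r) (D := 1) hB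
    (fun w hw => by
      obtain ⟨b, hb, hbw⟩ := hT w hw
      exact_mod_cast card_pos.2 ⟨b, (mem_bipartiteBelow r).2 ⟨hb, hbw⟩⟩) ⌊y⌋₊
  refine ⟨A, hAB, (Nat.cast_le.2 hAy).trans (Nat.floor_le (by linarith)), ?_⟩
  have hsplit : (#{w ∈ T | ∃ a ∈ A, r a w} : ℝ) + #{w ∈ T | ∀ a ∈ A, ¬ r a w} = #T := by
    have := card_filter_add_card_filter_not (s := T) (fun w => ∃ a ∈ A, r a w)
    push Not at this
    exact_mod_cast this
  have hexp : Real.exp (-(1 / #B)) ^ ⌊y⌋₊ ≤ 1 - y / (4 * s) := by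
    have hs : 0 < s := hB0.trans_le hBs
    set u := y / (2 * s) with hu
    have hu0 : 0 < u := by positivity
    have hu1 : u ≤ 1 := (div_le_one (by positivity)).2 hys
    have hle : u ≤ ⌊y⌋₊ * (1 / (#B : ℝ)) := by
      have hfloor : y / 2 ≤ ⌊y⌋₊ := by
        have h1 : (1 : ℝ) ≤ ⌊y⌋₊ := by exact_mod_cast Nat.le_floor (by simpa using hy)
        linarith [Nat.lt_floor_add_one y]
      calc u = y / 2 * (1 / s) := by rw [hu]; field_simp
        _ ≤ ⌊y⌋₊ * (1 / (#B : ℝ)) := by gcongr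
    calc Real.exp (-(1 / #B)) ^ ⌊y⌋₊ ≤ Real.exp (-u) := by
          rw [← Real.exp_nat_mul, Real.exp_le_exp]; linarith
      _ ≤ (1 + u)⁻¹ := by
          rw [Real.exp_neg]; gcongr; linarith [Real.add_one_le_exp u]
      _ ≤ 1 - u / 2 := by
          rw [inv_le_iff_one_le_mul₀ (by positivity)]; nlinarith
      _ = 1 - y / (4 * s) := by rw [hu]; ring
  linarith [mul_le_mul_of_nonneg_left hexp (Nat.cast_nonneg' (α := ℝ) #T),
    show (#T : ℝ) * (1 - y / (4 * s)) = #T - #T * y / (4 * s) by ring]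

end Covering

section Greedy

variable {ι α : Type*}

lemma exists_pairwise_of_extend [Nonempty α] (t : Finset ι) (Φ : ι → α → Prop)
    {R : ι → ι → α → α → Prop} (hR : ∀ i j a b, R i j a b → R j i b a)
    (hext : ∀ s ⊆ t, ∀ f : ι → α, (∀ i ∈ s, Φ i (f i)) → ∀ i ∈ t, i ∉ s →
      ∃ a, Φ i a ∧ ∀ j ∈ s, R i j a (f j)) :
    ∃ f : ι → α, (∀ i ∈ t, Φ i (f i)) ∧ ∀ i ∈ t, ∀ j ∈ t, i ≠ j → R i j (f i) (f j) := by
  classical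
  induction t using Finset.induction_on with
  | empty => exact ⟨fun _ => Classical.arbitrary α, by simp, by simp⟩
  | insert i s his ih =>
    obtain ⟨f, hΦ, hpair⟩ := ih fun s' hs' f hf j hj =>
      hext s' (hs'.trans (subset_insert i s)) f hf j (mem_insert_of_mem hj)
    obtain ⟨a, ha, hai⟩ := hext s (subset_insert i s) f hΦ i (mem_insert_self i s) his
    have hf : ∀ j ∈ s, Function.update f i a j = f j := fun j hj =>
      Function.update_of_ne (ne_of_mem_of_not_mem hj his) a f
    refine ⟨Function.update f i a, forall_mem_insert .. |>.2 ⟨by simpa using ha, fun j hj => ?_⟩,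
      forall_mem_insert .. |>.2 ⟨forall_mem_insert .. |>.2 ⟨by simp, fun j hj _ => ?_⟩,
        fun j hj => forall_mem_insert .. |>.2 ⟨fun _ => ?_, fun k hk hjk => ?_⟩⟩⟩
    · exact hf j hj ▸ hΦ j hj
    · simpa [hf j hj] using hai j hj
    · simpa [hf j hj] using hR _ _ _ _ (hai j hj)
    · simpa [hf j hj, hf k hk] using hpair j hj k hk hjk

lemma exists_pairwise_disjoint [Fintype ι] {β : Type*} (F : α → Finset β)
    {Φ : α → Prop} {m : ℕ} (hF : ∀ a, Φ a → #(F a) ≤ m)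
    (hext : ∀ Z : Finset β, #Z ≤ Fintype.card ι * m → ∃ a, Φ a ∧ Disjoint (F a) Z) :
    ∃ f : ι → α, (∀ i, Φ (f i)) ∧ Pairwise (Function.onFun Disjoint fun i => F (f i)) := by
  classical
  obtain ⟨a, -⟩ := hext ∅ (by simp)
  have : Nonempty α := ⟨a⟩
  obtain ⟨f, hΦ, hdisj⟩ := exists_pairwise_of_extend (univ : Finset ι) (fun _ => Φ)
    (R := fun _ _ a b => Disjoint (F a) (F b)) (fun _ _ _ _ h => h.symm) fun s _ f hf i _ _ => by
      obtain ⟨a, ha, hdisj⟩ := hext (s.biUnion fun j => F (f j))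
        ((card_biUnion_le_card_mul s _ m fun j hj => hF _ (hf j hj)).trans
          (by gcongr; exact card_le_univ s))
      exact ⟨a, ha, fun j hj => hdisj.mono_right (subset_biUnion_of_mem (fun j => F (f j)) hj)⟩
  exact ⟨f, fun i => hΦ i (mem_univ i), fun i j hij => hdisj i (mem_univ i) j (mem_univ j) hij⟩

end Greedy

lemma IsBipartiteWith.compl {V : Type*} {G : SimpleGraph V} {S : Set V}
    (hG : IsBipartiteWith G S) : IsBipartiteWith G Sᶜ := fun v w hvw => by
  have := hG hvw
  simp only [Set.mem_compl_iff]
  tauto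

section Paths

variable {V : Type*} [DecidableEq V] {G : SimpleGraph V}

/-- There is a path of length `l` in `G` from `u` to `v` whose vertex set is `Q`. -/
def PathOn (G : SimpleGraph V) (l : ℕ) (Q : Finset V) (u v : V) : Prop :=
  ∃ p : G.Walk u v, p.IsPath ∧ p.length = l ∧ p.support.toFinset = Q

namespace PathOn

variable {k l : ℕ} {Q R : Finset V} {u v w x : V}

lemma refl (v : V) : PathOn G 0 {v} v v := ⟨.nil, by simp⟩

lemma of_adj (h : G.Adj u v) : PathOn G 1 {u, v} u v :=
  ⟨h.toWalk, by simpa using h.ne, rfl, by simp⟩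

lemma symm (h : PathOn G l Q u v) : PathOn G l Q v u := by
  obtain ⟨p, hp, hl, hQ⟩ := h
  exact ⟨p.reverse, hp.reverse, by simpa using hl, by simpa using hQ⟩

lemma start_mem (h : PathOn G l Q u v) : u ∈ Q := by
  obtain ⟨p, -, -, rfl⟩ := h
  simp

lemma end_mem (h : PathOn G l Q u v) : v ∈ Q := h.symm.start_mem

lemma card (h : PathOn G l Q u v) : #Q = l + 1 := by
  obtain ⟨p, hp, rfl, rfl⟩ := h
  rw [List.toFinset_card_of_nodup hp.support_nodup, p.length_support]

lemma append (h : PathOn G k Q u v) (h' : PathOn G l R v w) (hQR : ∀ x ∈ Q, x ∈ R → x = v) :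
    PathOn G (k + l) (Q ∪ R) u w := by
  obtain ⟨p, hp, rfl, rfl⟩ := h
  obtain ⟨q, hq, rfl, rfl⟩ := h'
  refine ⟨p.append q, ?_, p.length_append q, by ext; simp [SimpleGraph.Walk.mem_support_append_iff]⟩
  have hq' := hq.support_nodup
  rw [← q.cons_tail_support, List.nodup_cons] at hq'
  rw [SimpleGraph.Walk.isPath_def, SimpleGraph.Walk.support_append]
  refine hp.support_nodup.append hq'.2 fun x hx hx' => ?_
  obtain rfl := hQR x (by simpa using hx) (by simpa using List.mem_of_mem_tail hx')
  exact hq'.1 hx'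

lemma join (h : PathOn G k Q u v) (h' : PathOn G l R w x) (hQR : Disjoint Q R) (hvw : G.Adj v w) :
    PathOn G (k + 1 + l) (Q ∪ R) u x := by
  have hvR := disjoint_left.1 hQR h.end_mem
  have hwQ := disjoint_right.1 hQR h'.start_mem
  convert (h.append (of_adj hvw) ?_).append h' ?_ using 1
  · grind [h.end_mem, h'.start_mem]
  · grind
  · grind [disjoint_left]

end PathOn

/-- The vertex `w` is the end of a path of length `k` in `G` which starts in `U` and has all its
other vertices in `D`. -/
def Reaches (G : SimpleGraph V) (U D : Finset V) (k : ℕ) (w : V) : Prop :=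
  ∃ u ∈ U, ∃ Q ⊆ insert w D, PathOn G k Q u w

namespace Reaches

variable {U D D' : Finset V} {k l : ℕ} {w a : V}

lemma of_mem (hw : w ∈ U) : Reaches G U D 0 w := ⟨w, hw, {w}, by simp, PathOn.refl w⟩

lemma extend (h : Reaches G U D k a) (haw : G.Adj a w) (hw : w ∉ D) (hD : D ⊆ D') (ha : a ∈ D') :
    Reaches G U D' (k + 1) w := by
  obtain ⟨u, hu, Q, hQ, hp⟩ := h
  refine ⟨u, hu, Q ∪ {a, w}, ?_, hp.append (PathOn.of_adj haw) ?_⟩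
  · grind
  · grind [haw.ne]

lemma mono (h : Reaches G U D k w) (hD : D ⊆ D') : Reaches G U D' k w := by
  obtain ⟨u, hu, Q, hQ, hp⟩ := h
  exact ⟨u, hu, Q, hQ.trans (insert_subset_insert w hD), hp⟩

lemma glue {U' : Finset V} (h : Reaches G U D k w) (h' : Reaches G U' D' l w)
    (hD : Disjoint D D') :
    ∃ u ∈ U, ∃ v ∈ U', ∃ Q ⊆ insert w (D ∪ D'), PathOn G (k + l) Q u v := by
  obtain ⟨u, hu, Q, hQ, hp⟩ := h
  obtain ⟨v, hv, R, hR, hq⟩ := h'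
  refine ⟨u, hu, v, hv, Q ∪ R, by grind, hp.append hq.symm ?_⟩
  grind [disjoint_left]

end Reaches

end Paths

/-! ### Stars and spiders -/

/-- A star of `G` with `s` leaves whose centre lies outside `Y`. -/
structure GraphStar {V : Type*} (G : SimpleGraph V) (Y : Set V) (s : ℕ) where
  centre : V
  leaves : Finset V
  centre_notMem : centre ∉ Y
  card_leaves : #leaves = s
  adj : ∀ w ∈ leaves, G.Adj centre w

namespace GraphStar

variable {V ι : Type*} {G : SimpleGraph V} {Y : Set V} {s : ℕ}

lemma leaves_subset (hG : IsBipartiteWith G Y) (σ : GraphStar G Y s) : ∀ w ∈ σ.leaves, w ∈ Y :=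
  fun w hw => by
    by_contra hwY
    exact σ.centre_notMem ((hG (σ.adj w hw)).2 hwY)

variable [DecidableEq V]

/-- The vertex set of a star. -/
def verts (σ : GraphStar G Y s) : Finset V := insert σ.centre σ.leaves

lemma card_verts_le (σ : GraphStar G Y s) : #σ.verts ≤ s + 1 :=
  (card_insert_le σ.centre σ.leaves).trans_eq (by rw [σ.card_leaves])

lemma centre_mem_verts (σ : GraphStar G Y s) : σ.centre ∈ σ.verts := mem_insert_self _ _

lemma leaves_subset_verts (σ : GraphStar G Y s) : σ.leaves ⊆ σ.verts := subset_insert _ _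

lemma pairwise_disjoint_leaves {σ : ι → GraphStar G Y s}
    (hσ : Pairwise (Function.onFun Disjoint fun i => (σ i).verts)) :
    Pairwise (Function.onFun Disjoint fun i => (σ i).leaves) := fun i j hij =>
  (hσ hij).mono (σ i).leaves_subset_verts (σ j).leaves_subset_verts

lemma card_le_card_centre_notMem_add [Fintype ι] {σ : ι → GraphStar G Y s}
    (hσ : Pairwise (Function.onFun Disjoint fun i => (σ i).verts)) (Z : Finset V) :
    Fintype.card ι ≤ #{i | (σ i).centre ∉ Z} + #Z := by
  rw [← card_univ, ← card_filter_add_card_filter_not fun i => (σ i).centre ∉ Z]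
  gcongr
  refine card_le_card_of_injOn (fun i => (σ i).centre) (fun i hi => by simpa using hi)
    fun i _ j _ hij => ?_
  by_contra hne
  exact disjoint_iff_ne.1 (hσ hne) _ (σ i).centre_mem_verts _ (σ j).centre_mem_verts hij

lemma biUnion_leaves_subset (hG : IsBipartiteWith G Y) (σ : ι → GraphStar G Y s) (A : Finset ι) :
    ∀ w ∈ A.biUnion fun i => (σ i).leaves, w ∈ Y := fun w hw => by
  obtain ⟨i, -, hwi⟩ := mem_biUnion.1 hw
  exact (σ i).leaves_subset hG w hwi

lemma card_biUnion_leaves {σ : ι → GraphStar G Y s} {A : Finset ι}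
    (hσ : (A : Set ι).PairwiseDisjoint fun i => (σ i).leaves) :
    #(A.biUnion fun i => (σ i).leaves) = #A * s := by
  rw [card_biUnion fun i hi j hj hij => hσ hi hj hij,
    sum_const_nat fun i _ => (σ i).card_leaves]

end GraphStar

/-- A path of length `l` from the centre of a star of the family `σ` to the centre of a star of the
family `τ`. -/
structure StarPath {V α β : Type*} [DecidableEq V] {G : SimpleGraph V} {Y : Set V} {s m : ℕ}
    (σ : α → GraphStar G Y s) (τ : β → GraphStar G Y m) (l : ℕ) where
  source : α
  target : β
  /-- The inner vertices of the path; the ends may be included. -/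
  inner : Finset V
  pathOn : PathOn G l (insert (σ source).centre (insert (τ target).centre inner))
    (σ source).centre (τ target).centre

namespace StarPath

variable {V α β : Type*} [DecidableEq V] {G : SimpleGraph V} {Y : Set V} {s m l : ℕ}
  {σ : α → GraphStar G Y s} {τ : β → GraphStar G Y m}

/-- The vertices of the path other than its start, which may be included. -/
def tail (P : StarPath σ τ l) : Finset V := insert (τ P.target).centre P.inner

lemma centre_mem_tail (P : StarPath σ τ l) : (τ P.target).centre ∈ P.tail := mem_insert_self _ _

lemma card_tail_le (P : StarPath σ τ l) : #P.tail ≤ l + 1 :=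
  (card_le_card (subset_insert _ _)).trans_eq P.pathOn.card

lemma card_inner_le (P : StarPath σ τ l) : #P.inner ≤ l + 1 :=
  (card_le_card (subset_insert _ _)).trans P.card_tail_le

end StarPath

lemma card_filter_biUnion_ends_le {V : Type*} [DecidableEq V] {G : SimpleGraph V} {Y : Set V}
    {t q s l : ℕ} {σ : Fin t × Fin q → GraphStar G Y s} {I : Finset (Fin t × Fin t)}
    {f : Fin t × Fin t → StarPath σ σ l}
    (hf : ∀ e ∈ I, (f e).source.1 = e.1 ∧ (f e).target.1 = e.2) (k : Fin t) :
    #{x ∈ I.biUnion fun e => {(f e).source, (f e).target} | x.1 = k} ≤ 2 * t := by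
  calc #{x ∈ I.biUnion fun e => {(f e).source, (f e).target} | x.1 = k}
      ≤ #((univ.image fun j => (f (k, j)).source) ∪ univ.image fun i => (f (i, k)).target) := by
        refine card_le_card fun x hx => ?_
        simp only [mem_filter, mem_biUnion, mem_insert, mem_singleton] at hx
        obtain ⟨⟨⟨i, j⟩, he, rfl | rfl⟩, rfl⟩ := hx
        · exact mem_union_left _ (mem_image.2 ⟨j, mem_univ _, by rw [(hf _ he).1]⟩)
        · exact mem_union_right _ (mem_image.2 ⟨i, mem_univ _, by rw [(hf _ he).2]⟩)
    _ ≤ t + t := (card_union_le _ _).trans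
        (add_le_add (card_image_le.trans_eq (card_fin t)) (card_image_le.trans_eq (card_fin t)))
    _ = 2 * t := (two_mul t).symm

/-- A core vertex joined by `q` paths of length `l`, the legs, to the centres of stars with `m`
leaves each; the legs are pairwise disjoint apart from the core, but a star may meet the legs. -/
structure Spider {V : Type*} [DecidableEq V] (G : SimpleGraph V) (Y : Set V) (q l m : ℕ) where
  core : V
  /-- The vertices of a leg other than the core, which may be included. -/
  leg : Fin q → Finset V
  star : Fin q → GraphStar G Y m
  pathOn : ∀ a, PathOn G l (insert core (leg a)) core (star a).centre
  centre_mem_leg : ∀ a, (star a).centre ∈ leg a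
  disjoint_leg : Pairwise (Function.onFun Disjoint leg)
  disjoint_leaves : Pairwise (Function.onFun Disjoint fun a => (star a).leaves)

namespace Spider

variable {V : Type*} [DecidableEq V] {G : SimpleGraph V} {Y : Set V} {q l m : ℕ}

/-- The core and the legs of a spider, without the leaves of its stars. -/
def verts (S : Spider G Y q l m) : Finset V := insert S.core (univ.biUnion S.leg)

lemma core_mem_verts (S : Spider G Y q l m) : S.core ∈ S.verts := mem_insert_self _ _

lemma leg_subset_verts (S : Spider G Y q l m) (a : Fin q) : S.leg a ⊆ S.verts :=
  (subset_biUnion_of_mem S.leg (mem_univ a)).trans (subset_insert _ _)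

lemma card_verts_le (S : Spider G Y q l m) : #S.verts ≤ q * (l + 1) + 1 := by
  refine (card_insert_le _ _).trans (Nat.succ_le_succ ?_)
  simpa using card_biUnion_le_card_mul univ S.leg (l + 1) fun a _ =>
    (card_le_card (subset_insert _ _)).trans_eq (S.pathOn a).card

end Spider

theorem hasTK_of_pathOn {V : Type*} [DecidableEq V] {G : SimpleGraph V} {t l : ℕ} {b : Fin t → V}
    (hb : Function.Injective b) (R : Fin t × Fin t → Finset V)
    (hR : ∀ i j, i < j → PathOn G (l + 1) (insert (b i) (insert (b j) (R (i, j)))) (b i) (b j))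
    (hbR : ∀ i j k, i < j → b k ∈ R (i, j) → k = i ∨ k = j)
    (hdisj : ∀ e e', e.1 < e.2 → e'.1 < e'.2 → e ≠ e' → Disjoint (R e) (R e')) :
    HasTK G t l := by
  choose p hp hl hsupp using hR
  simp only [Finset.ext_iff, List.mem_toFinset, mem_insert] at hsupp
  have hinter : ∀ {i j i' j' v} (h : i < j) (h' : i' < j'), (i, j) ≠ (i', j') →
      v ∈ (p i j h).support → v ∈ (p i' j' h').support → v = b i ∨ v = b j := by
    intro i j i' j' v h h' hne hv hv'
    obtain hv | hv | hv := (hsupp i j h v).1 hv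
    · exact .inl hv
    · exact .inr hv
    obtain rfl | rfl | hv' := (hsupp i' j' h' v).1 hv'
    · exact (hbR i j i' h hv).imp (congrArg b) (congrArg b)
    · exact (hbR i j j' h hv).imp (congrArg b) (congrArg b)
    · exact (disjoint_left.1 (hdisj _ _ h h' hne) hv hv').elim
  exact ⟨_, b, hb, p, hp, hl, fun i j h i' j' h' hne v hv hv' =>
    ⟨hinter h h' hne hv hv', hinter h' h hne.symm hv' hv⟩, rfl⟩

namespace Spider

variable {V ι : Type*} [DecidableEq V] {G : SimpleGraph V} {Y : Set V} {q l k m : ℕ}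
  {S : ι → Spider G Y q l m}

/-- The stars of a family of spiders, as a single family. -/
def stars (S : ι → Spider G Y q l m) (x : ι × Fin q) : GraphStar G Y m := (S x.1).star x.2

lemma centre_mem_verts (S : ι → Spider G Y q l m) (x : ι × Fin q) :
    (stars S x).centre ∈ (S x.1).verts :=
  (S x.1).leg_subset_verts x.2 ((S x.1).centre_mem_leg x.2)

lemma pairwiseDisjoint_leaves (S : ι → Spider G Y q l m) (i : ι) :
    {x | x.1 = i}.PairwiseDisjoint fun x => (stars S x).leaves := by
  rintro ⟨i, a⟩ rfl ⟨_, b⟩ rfl hab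
  exact (S _).disjoint_leaves fun h => hab (congrArg (Prod.mk _) h)

/-- The vertices, other than the cores, of the path that joins the cores of two spiders through a
path between their stars. -/
def route (S : ι → Spider G Y q l m) (P : StarPath (stars S) (stars S) k) : Finset V :=
  (S P.source.1).leg P.source.2 ∪ P.inner ∪ (S P.target.1).leg P.target.2

variable {P Q : StarPath (stars S) (stars S) k}
variable (hS : Pairwise (Function.onFun Disjoint fun i => (S i).verts))
include hS

lemma disjoint_leg_of_ne {x y : ι × Fin q} (hxy : x ≠ y) :
    Disjoint ((S x.1).leg x.2) ((S y.1).leg y.2) := by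
  obtain ⟨i, a⟩ := x
  obtain ⟨j, b⟩ := y
  obtain rfl | hij := eq_or_ne i j
  · exact (S i).disjoint_leg fun h => hxy (congrArg (Prod.mk i) h)
  · exact (hS hij).mono ((S i).leg_subset_verts a) ((S j).leg_subset_verts b)

lemma pathOn_route (hP : P.source.1 ≠ P.target.1) (hPS : ∀ i, Disjoint P.inner (S i).verts) :
    PathOn G (l + k + l)
      (insert (S P.source.1).core (insert (S P.target.1).core (route S P)))
      (S P.source.1).core (S P.target.1).core := by
  have hmem : ∀ i, ∀ v ∈ P.inner, v ∉ (S i).verts := fun i => disjoint_left.1 (hPS i)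
  have hst : ∀ v ∈ (S P.source.1).verts, v ∉ (S P.target.1).verts := disjoint_left.1 (hS hP)
  have hleg := fun x : ι × Fin q => insert_subset (S x.1).core_mem_verts
    ((S x.1).leg_subset_verts x.2)
  have hcs := centre_mem_verts S P.source
  have hct := centre_mem_verts S P.target
  have hcs' := (S P.source.1).centre_mem_leg P.source.2
  have hct' := (S P.target.1).centre_mem_leg P.target.2
  convert (((S P.source.1).pathOn P.source.2).append P.pathOn ?_).append
    ((S P.target.1).pathOn P.target.2).symm ?_ using 1
  · ext v
    simp only [route, stars, mem_insert, mem_union]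
    grind
  · intro v hv hv'
    have hv := hleg _ hv
    simp only [mem_insert] at hv'
    grind [stars]
  · intro v hv hv'
    have hv' := hleg _ hv'
    have hv := fun h => @hleg P.source v h
    simp only [mem_insert, mem_union] at *
    grind

lemma eq_of_core_mem_route (hPS : ∀ i, Disjoint P.inner (S i).verts) {i : ι}
    (hi : (S i).core ∈ route S P) : i = P.source.1 ∨ i = P.target.1 := by
  have hleg : ∀ x : ι × Fin q, (S i).core ∈ (S x.1).leg x.2 → i = x.1 := fun x hx => by
    by_contra hne
    exact disjoint_left.1 (hS hne) (S i).core_mem_verts ((S x.1).leg_subset_verts x.2 hx)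
  simp only [route, mem_union] at hi
  obtain (hi | hi) | hi := hi
  · exact .inl (hleg _ hi)
  · exact (disjoint_left.1 (hPS i) hi (S i).core_mem_verts).elim
  · exact .inr (hleg _ hi)

lemma disjoint_route [DecidableEq ι] (hP : ∀ i, Disjoint P.inner (S i).verts)
    (hQ : ∀ i, Disjoint Q.inner (S i).verts)
    (hends : Disjoint {P.source, P.target} ({Q.source, Q.target} : Finset (ι × Fin q)))
    (hinner : Disjoint P.inner Q.inner) : Disjoint (route S P) (route S Q) := by
  have hleg : ∀ x ∈ ({P.source, P.target} : Finset _), ∀ y ∈ ({Q.source, Q.target} : Finset _),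
      Disjoint ((S x.1).leg x.2) ((S y.1).leg y.2) := fun x hx y hy =>
    disjoint_leg_of_ne hS (disjoint_iff_ne.1 hends x hx y hy)
  have hPleg := fun x : ι × Fin q => (hP x.1).mono_right ((S x.1).leg_subset_verts x.2)
  have hQleg := fun x : ι × Fin q => ((hQ x.1).mono_right ((S x.1).leg_subset_verts x.2)).symm
  simp only [route, disjoint_union_left, disjoint_union_right]
  simp_all

end Spider

/-! ### Parameters -/

/-- The numerical regime of the proof, for a graph on `n` vertices of average degree about `d`:
expansion is by a factor `1 + 1 / L`, and `r` is the fourth root of `d`. -/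
structure Scale (n : ℕ) (d L r : ℝ) : Prop where
  d_eq : d = r ^ 4
  le_L : 1000 ≤ L
  L_pow_le : L ^ 20 ≤ r
  log_le : 4 * Real.log n ≤ r
  mul_le : d * L ^ 40 ≤ n
  le_exp : n ≤ d * Real.exp L

namespace Scale

variable {n : ℕ} {d L r : ℝ}

lemma L_pos (hs : Scale n d L r) : 0 < L := by linarith [hs.le_L]

lemma mul_pow_le (hs : Scale n d L r) {a b : ℕ} (hab : a < b) {k : ℝ} (hk : k ≤ 1000) :
    k * L ^ a ≤ L ^ b := by
  have hL := hs.L_pos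
  calc k * L ^ a ≤ L * L ^ a := by gcongr; exact hk.trans hs.le_L
    _ = L ^ (a + 1) := by ring
    _ ≤ L ^ b := pow_le_pow_right₀ (by linarith [hs.le_L]) hab

lemma mul_pow_le_r (hs : Scale n d L r) {a : ℕ} (ha : a < 20) {k : ℝ} (hk : k ≤ 1000) :
    k * L ^ a ≤ r :=
  (hs.mul_pow_le ha hk).trans hs.L_pow_le

lemma r_ge (hs : Scale n d L r) : 1000 ≤ r := by
  simpa using hs.mul_pow_le_r (a := 0) (by simp) le_rfl

lemma r_pos (hs : Scale n d L r) : 0 < r := by linarith [hs.r_ge]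

lemma d_pos (hs : Scale n d L r) : 0 < d := hs.d_eq ▸ pow_pos hs.r_pos 4

lemma mul_r_sq_le_d (hs : Scale n d L r) : 1000 * r ^ 2 ≤ d := by
  have hr := hs.r_ge
  calc 1000 * r ^ 2 ≤ r ^ 2 * r ^ 2 := by gcongr; nlinarith
    _ = d := by rw [hs.d_eq]; ring

lemma mul_r_le_d (hs : Scale n d L r) : 1000 * r ≤ d := by
  nlinarith [hs.mul_r_sq_le_d, hs.r_ge]

lemma mul_le_of_mul_pow_le (hs : Scale n d L r) {a b : ℕ} (hab : a < b) {c : ℝ}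
    (hc : d * L ^ b ≤ c) : 1000 * (d * L ^ a) ≤ c := by
  calc 1000 * (d * L ^ a) = d * (1000 * L ^ a) := by ring
    _ ≤ d * L ^ b := mul_le_mul_of_nonneg_left (hs.mul_pow_le hab le_rfl) hs.d_pos.le
    _ ≤ c := hc

end Scale

/-- The sizes used in the construction: `t` branch vertices, each the core of a spider with `3 * t`
legs that end in stars with `m` leaves; these spiders are cut out of `p` stars with `s` leaves.
Connecting paths between leaves of stars have length `2 * T`. -/
structure Sizes (d L r : ℝ) (T t m p s : ℕ) : Prop where
  le_T : 8 * L ^ 2 ≤ T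
  T_le : T ≤ 9 * L ^ 2
  le_t : r ^ 2 ≤ t
  t_le : t ≤ 2 * r ^ 2
  le_m : r ^ 2 * L ^ 6 ≤ m
  m_le : m ≤ 2 * (r ^ 2 * L ^ 6)
  le_p : 2 * L ^ 7 ≤ p
  p_le : p ≤ 3 * L ^ 7
  le_s : d / (2 * L) ≤ s
  s_le : s ≤ d / L

namespace Sizes

variable {n T t m p s : ℕ} {d L r : ℝ}

lemma exists_of_scale (hs : Scale n d L r) :
    ∃ T m p s, Sizes d L r T ⌈r ^ 2⌉₊ m p s := by
  have hL := hs.le_L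
  have hr := hs.r_pos
  have hd := hs.d_pos
  have hceil {x : ℝ} (hx : 0 ≤ x) : x ≤ ⌈x⌉₊ ∧ (⌈x⌉₊ : ℝ) ≤ x + 1 :=
    ⟨Nat.le_ceil x, (Nat.ceil_lt_add_one hx).le⟩
  have hpow {a : ℕ} : 1 ≤ L ^ a := one_le_pow₀ (by linarith)
  have hr2 : 1 ≤ r ^ 2 := one_le_pow₀ (by linarith [hs.r_ge])
  have hm : 1 ≤ r ^ 2 * L ^ 6 := one_le_mul_of_one_le_of_one_le hr2 hpow
  have hs2 : 1 ≤ d / (2 * L) := by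
    rw [le_div_iff₀ (by positivity)]
    linarith [hs.mul_r_le_d, hs.mul_pow_le_r (a := 1) (k := 1) (by simp) (by norm_num)]
  refine ⟨⌈8 * L ^ 2⌉₊, ⌈r ^ 2 * L ^ 6⌉₊, ⌈2 * L ^ 7⌉₊, ⌊d / L⌋₊, ?_⟩
  constructor
  case le_s =>
    have := Nat.lt_floor_add_one (d / L)
    linarith [show d / L = d / (2 * L) + d / (2 * L) by field_simp; ring]
  case s_le => exact Nat.floor_le (by positivity)
  all_goals first
    | exact (hceil (by positivity)).1
    | exact (hceil (by positivity)).2.trans (by linarith [@hpow 2, @hpow 7])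

variable (hs : Scale n d L r) (hz : Sizes d L r T t m p s)
include hs hz

lemma path_le : (2 * T + 3 : ℝ) ≤ 19 * L ^ 2 := by
  nlinarith [hz.T_le, hs.le_L]

lemma paths_le : (p * (3 * t) * (2 * T + 3) : ℝ) ≤ 342 * (r ^ 2 * L ^ 9) := by
  have hL := hs.L_pos
  calc (p * (3 * t) * (2 * T + 3) : ℝ) ≤ 3 * L ^ 7 * (3 * (2 * r ^ 2)) * (19 * L ^ 2) := by
        gcongr
        exacts [hz.p_le, hz.t_le, hz.path_le hs]
    _ = 342 * (r ^ 2 * L ^ 9) := by ring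

lemma ends_le : (p * (3 * t) * (2 * T + 3) + t : ℝ) ≤ 344 * (r ^ 2 * L ^ 9) := by
  have : r ^ 2 ≤ r ^ 2 * L ^ 9 :=
    le_mul_of_one_le_right (by positivity) (one_le_pow₀ (by linarith [hs.le_L]))
  linarith [hz.paths_le hs, hz.t_le]

lemma spiders_le : (t * (3 * t * (2 * T + 3) + 1) : ℝ) ≤ 240 * (d * L ^ 2) := by
  have hL := hs.le_L
  have hr := hs.r_ge
  calc (t * (3 * t * (2 * T + 3) + 1) : ℝ)
      ≤ 2 * r ^ 2 * (3 * (2 * r ^ 2) * (19 * L ^ 2) + r ^ 2 * L ^ 2) := by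
        gcongr
        exacts [hz.t_le, hz.t_le, hz.path_le hs, one_le_mul_of_one_le_of_one_le
          (one_le_pow₀ (by linarith)) (one_le_pow₀ (by linarith))]
    _ = 230 * (d * L ^ 2) := by rw [hs.d_eq]; ring
    _ ≤ 240 * (d * L ^ 2) := by linarith [mul_pos hs.d_pos (pow_pos hs.L_pos 2)]

lemma routes_le : (240 * (d * L ^ 2) + t * t * (2 * T + 3) : ℝ) ≤ d * L ^ 4 / 200 := by
  have hL := hs.le_L
  have hd := hs.d_pos
  calc (240 * (d * L ^ 2) + t * t * (2 * T + 3) : ℝ)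
      ≤ 240 * (d * L ^ 2) + 2 * r ^ 2 * (2 * r ^ 2) * (19 * L ^ 2) := by
        gcongr
        exacts [hz.t_le, hz.t_le, hz.path_le hs]
    _ = 63200 * (d * L ^ 2) / 200 := by rw [hs.d_eq]; ring
    _ ≤ d * L ^ 4 / 200 := by
        have : d * L ^ 2 * 63200 ≤ d * L ^ 2 * (L * L) := by gcongr; nlinarith
        linarith

lemma core_leaves_ge : d * L ^ 6 ≤ p * s := by
  have hL := hs.L_pos
  have hd := hs.d_pos
  calc d * L ^ 6 = 2 * L ^ 7 * (d / (2 * L)) := by field_simp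
    _ ≤ p * (s : ℝ) := by gcongr; exacts [hz.le_p, hz.le_s]

lemma leaves_ge : d * L ^ 6 ≤ t * m := by
  have hL := hs.L_pos
  calc d * L ^ 6 = r ^ 2 * (r ^ 2 * L ^ 6) := by rw [hs.d_eq]; ring
    _ ≤ t * (m : ℝ) := by gcongr; exacts [hz.le_t, hz.le_m]

lemma m_le_div : m ≤ d / L := by
  have hL := hs.L_pos
  have hr := hs.mul_pow_le_r (a := 7) (k := 2) (by simp) (by norm_num)
  rw [le_div_iff₀ hL]
  calc m * L ≤ 2 * (r ^ 2 * L ^ 6) * L := by gcongr; exact hz.m_le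
    _ = r ^ 2 * (2 * L ^ 7) := by ring
    _ ≤ r ^ 2 * r ^ 2 := by gcongr; nlinarith [hs.r_ge]
    _ = d := by rw [hs.d_eq]; ring

lemma legs_le :
    (240 * (d * L ^ 2) + p + (p * (3 * t) * (2 * T + 3) + t) + p * (3 * t) * (2 * T + 3) : ℝ)
      ≤ d * L ^ 4 / 200 := by
  have hL : ∀ a, 1 ≤ L ^ a := fun a => one_le_pow₀ (by linarith [hs.le_L])
  have hr2 : 1 ≤ r ^ 2 := one_le_pow₀ (by linarith [hs.r_ge])
  have hL9 : L ^ 7 ≤ r ^ 2 * L ^ 9 :=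
    (pow_le_pow_right₀ (by linarith [hs.le_L]) (by norm_num)).trans
      (le_mul_of_one_le_left (by linarith [hL 9]) hr2)
  have hd : r ^ 2 * L ^ 9 ≤ d := by
    calc r ^ 2 * L ^ 9 ≤ r ^ 2 * r ^ 2 := by
          gcongr
          nlinarith [hs.mul_pow_le_r (a := 9) (k := 1) (by simp) (by norm_num), hs.r_ge]
      _ = d := by rw [hs.d_eq]; ring
  have hdL : d ≤ d * L ^ 2 := le_mul_of_one_le_right hs.d_pos.le (hL 2)
  have hdL' : 1000 * (1000 * (d * L ^ 2)) ≤ d * L ^ 4 := by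
    linarith [hs.mul_le_of_mul_pow_le (a := 2) (b := 3) (by simp) le_rfl,
      hs.mul_le_of_mul_pow_le (a := 3) (b := 4) (by simp) le_rfl]
  linarith [hz.paths_le hs, hz.ends_le hs, hz.p_le]

lemma stars_lt :
    (240 * (d * L ^ 2) + p * (s + 1) + (p * (3 * t) * (2 * T + 3) + t) * (m + 1) : ℝ)
      < n / (8 * L) := by
  have hL := hs.le_L
  have hd := hs.d_pos
  have hpow {a b : ℕ} (hab : a ≤ b) : d * L ^ a ≤ d * L ^ b :=
    mul_le_mul_of_nonneg_left (pow_le_pow_right₀ (by linarith) hab) hd.le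
  have hr2 : 1 ≤ r ^ 2 := one_le_pow₀ (by linarith [hs.r_ge])
  have hcore : p * (s + 1) ≤ 6 * (d * L ^ 7) := by
    have hs1 : (s + 1 : ℝ) ≤ 2 * d := by
      linarith [hz.s_le, div_le_self hd.le (show 1 ≤ L by linarith), hs.mul_r_le_d, hs.r_ge]
    calc p * (s + 1) ≤ 3 * L ^ 7 * (2 * d) := by gcongr; exact hz.p_le
      _ = 6 * (d * L ^ 7) := by ring
  have hm : (m + 1 : ℝ) ≤ 3 * (r ^ 2 * L ^ 6) := by
    linarith [hz.m_le, one_le_mul_of_one_le_of_one_le hr2 (one_le_pow₀ (by linarith) : 1 ≤ L ^ 6)]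
  have hend : (p * (3 * t) * (2 * T + 3) + t) * (m + 1) ≤ 1032 * (d * L ^ 15) := by
    refine (mul_le_mul (hz.ends_le hs) hm (by positivity) (by positivity)).trans_eq ?_
    rw [hs.d_eq]
    ring
  have hn := hs.mul_le_of_mul_pow_le (a := 17) (by simp) hs.mul_le
  have h17 := hs.mul_le_of_mul_pow_le (a := 16) (b := 17) (by simp) le_rfl
  rw [lt_div_iff₀ (by positivity)]
  calc (240 * (d * L ^ 2) + p * (s + 1) + (p * (3 * t) * (2 * T + 3) + t) * (m + 1)) * (8 * L)
      ≤ 1278 * (d * L ^ 15) * (8 * L) := by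
        gcongr
        linarith [hpow (a := 2) (b := 15) (by simp), hpow (a := 7) (b := 15) (by simp)]
    _ = 10224 * (d * L ^ 16) := by ring
    _ < n := by linarith [mul_pos hd (pow_pos hs.L_pos 16)]

end Sizes

lemma card_interedges_le_card_mul {V : Type*} {G : SimpleGraph V} [DecidableRel G.Adj]
    {X Y : Finset V} {k : ℝ} (hk : ∀ x ∈ X, (#{y ∈ Y | G.Adj y x} : ℝ) ≤ k) :
    (#(G.interedges X Y) : ℝ) ≤ #X * k := by
  have hsum : #(G.interedges X Y) = ∑ x ∈ X, #{y ∈ Y | G.Adj y x} := by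
    simp only [SimpleGraph.interedges, Rel.interedges, card_filter, sum_product, G.adj_comm]
  rw [hsum, Nat.cast_sum, ← nsmul_eq_mul]
  exact sum_le_card_nsmul _ _ _ hk

section Graph

variable {V : Type*} [Fintype V] {G : SimpleGraph V} [DecidableRel G.Adj]

/-- The union of the neighbourhoods of the vertices of `A`; it may meet `A`. -/
def nbhd (G : SimpleGraph V) [DecidableRel G.Adj] (A : Finset V) : Finset V :=
  {w | ∃ a ∈ A, G.Adj a w}

lemma mem_nbhd {A : Finset V} {w : V} : w ∈ nbhd G A ↔ ∃ a ∈ A, G.Adj a w := by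
  simp [nbhd]

lemma nbhd_subset_compl {S : Set V} (hG : IsBipartiteWith G S) {A : Finset V}
    (hA : ∀ a ∈ A, a ∈ S) : ∀ w ∈ nbhd G A, w ∈ Sᶜ := fun w hw => by
  obtain ⟨a, ha, haw⟩ := mem_nbhd.1 hw
  exact (hG haw).1 (hA a ha)

/-- The vertices with at least `k` neighbours in `B`. -/
noncomputable def rich (G : SimpleGraph V) [DecidableRel G.Adj] (B : Finset V) (k : ℝ) :
    Finset V :=
  {w | k ≤ (#{b ∈ B | G.Adj b w} : ℝ)}

lemma mem_rich {B : Finset V} {k : ℝ} {w : V} :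
    w ∈ rich G B k ↔ k ≤ (#{b ∈ B | G.Adj b w} : ℝ) := by
  simp [rich]

lemma exists_subset_dominating {B : Finset V} {c d L r : ℝ} (hs : Scale (Fintype.card V) d L r)
    (hc : d ≤ c) (hB : (#B : ℝ) ≤ 2 * c) :
    ∃ A ⊆ B, (#A : ℝ) ≤ c / r ∧ rich G B (r ^ 2) ⊆ nbhd G A := by
  have hr := hs.r_pos
  have hc0 : 0 < c := hs.d_pos.trans_le hc
  obtain ⟨A, hAB, hA, hcov⟩ := exists_subset_covering (r := G.Adj) (B := B) (D := r ^ 2)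
    (T := rich G B (r ^ 2)) (by positivity) (fun w hw => mem_rich.1 hw)
  refine ⟨A, hAB, hA.trans ?_, fun w hw => mem_nbhd.2 (hcov w hw)⟩
  set T := rich G B (r ^ 2)
  have hlog : Real.log #T ≤ r / 4 := by
    obtain hT | hT := (#T).eq_zero_or_pos
    · rw [hT]; simpa using by positivity
    · have : Real.log #T ≤ Real.log (Fintype.card V) := by gcongr; exact card_le_univ T
      linarith [hs.log_le]
  have hone : 1 ≤ c / r / 2 := by
    rw [div_div, le_div_iff₀ (by positivity)]
    linarith [hs.mul_r_le_d]
  calc #B * Real.log #T / r ^ 2 + 1 ≤ 2 * c * (r / 4) / r ^ 2 + c / r / 2 := by gcongr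
    _ = c / r := by field_simp; ring

variable [DecidableEq V]

lemma card_interedges_le {X Y : Finset V} {k : ℝ}
    (hk : ∀ w ∈ Y, (#{x ∈ X | G.Adj x w} : ℝ) ≤ k) :
    (#(G.interedges X Y) : ℝ) ≤ #(Y ∩ nbhd G X) * k := by
  have hnbhd : G.interedges X Y = G.interedges X (Y ∩ nbhd G X) := by
    ext e
    simp only [G.mem_interedges_iff, mem_inter, mem_nbhd]
    tauto
  have : Std.Symm G.Adj := ⟨fun _ _ h => h.symm⟩
  rw [hnbhd, show #(G.interedges X (Y ∩ nbhd G X)) = #(G.interedges (Y ∩ nbhd G X) X) from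
    Rel.card_interedges_comm (r := G.Adj) _ _]
  exact card_interedges_le_card_mul fun w hw => hk w (mem_inter.1 hw).1

/-! ### Growing fronts -/

/-- The form in which robust expansion is used: a set `Z` that catches all but few of the edges
leaving a set `X` of moderate size has size at least `|X| / L`. -/
def Expands (G : SimpleGraph V) [DecidableRel G.Adj] (d L : ℝ) : Prop :=
  ∀ X Z : Finset V, d * L ≤ #X → (#X : ℝ) ≤ Fintype.card V / 2 →
    (#(G.interedges X (X ∪ Z)ᶜ) : ℝ) ≤ d * #X / L → (#X : ℝ) / L ≤ #Z

/-- A stage of a breadth-first growth in the bipartite graph `G` avoiding the set `Z`: `B` is the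
current layer, `P` the previous one, and few edges leave `P` towards vertices outside `B ∪ Z`.
Together the layers have at least `c` vertices; `S` is the side of the bipartition containing
`B`. -/
structure Front (G : SimpleGraph V) [DecidableRel G.Adj] (S : Set V) (d L c : ℝ)
    (P B Z : Finset V) : Prop where
  subset_side : ∀ v ∈ B, v ∈ S
  subset_opp : ∀ v ∈ P, v ∉ S
  few_edges : (#(G.interedges P (P ∪ B ∪ Z)ᶜ) : ℝ) ≤ d * c / (100 * L ^ 2)
  le_card : c ≤ #P + #B
  card_le : (#B : ℝ) ≤ 2 * c

variable {S : Set V} {P B Z : Finset V} {c u d L r : ℝ}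

lemma Front.exists_of_card (hd : 0 ≤ d) (hc : 1 ≤ c) {Q : Finset V} (hcQ : c ≤ #Q)
    (hQS : ∀ v ∈ Q, v ∈ S) : ∃ B ⊆ Q, ∀ Z, Front G S d L c ∅ B Z := by
  obtain ⟨B, hBQ, hB⟩ := exists_subset_card_eq (Nat.ceil_le.2 hcQ)
  refine ⟨B, hBQ, fun Z => ⟨fun v hv => hQS v (hBQ hv), by simp, ?_, ?_, ?_⟩⟩
  · simpa using by positivity
  · simpa [hB] using Nat.le_ceil c
  · rw [hB]
    linarith [Nat.ceil_lt_add_one (a := c) (by linarith)]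

lemma exists_subset_card_nbhd_ge (hs : Scale (Fintype.card V) d L r) (hc : d ≤ c)
    (hB : (#B : ℝ) ≤ 2 * c)
    (hN : r ^ 2 / (100 * L ^ 2) * c ≤ (#(nbhd G B \ Z) : ℝ)) :
    ∃ A ⊆ B, (#A : ℝ) ≤ c / r ∧ 2 * c + 1 ≤ (#(nbhd G A \ Z) : ℝ) := by
  have hr := hs.r_pos
  have hL := hs.L_pos
  have hc0 : 0 < c := hs.d_pos.trans_le hc
  have hrc : 1000 * r ≤ c := hs.mul_r_le_d.trans hc
  obtain ⟨A, hAB, hA, hcov⟩ := exists_subset_covering_part (r := G.Adj) (T := nbhd G B \ Z)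
    (y := c / r) hB ((one_le_div hr).2 (by linarith))
    (by rw [div_le_iff₀ hr]; nlinarith [hs.r_ge])
    (fun w hw => mem_nbhd.1 (mem_sdiff.1 hw).1)
  refine ⟨A, hAB, hA, ?_⟩
  have hrL : 2400 * L ^ 2 ≤ r := by
    nlinarith [hs.mul_pow_le_r (a := 3) (by simp) le_rfl, hs.le_L, sq_nonneg L]
  calc 2 * c + 1 ≤ 3 * c := by linarith [hs.r_ge]
    _ = r ^ 2 / (100 * (r / 2400)) * c * (c / r) / (4 * (2 * c)) := by field_simp; norm_num
    _ ≤ r ^ 2 / (100 * L ^ 2) * c * (c / r) / (4 * (2 * c)) := by gcongr; linarith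
    _ ≤ #(nbhd G B \ Z) * (c / r) / (4 * (2 * c)) := by gcongr
    _ ≤ #{w ∈ nbhd G B \ Z | ∃ a ∈ A, G.Adj a w} := hcov
    _ ≤ #(nbhd G A \ Z) := by
      refine Nat.cast_le.2 (card_le_card fun w hw => ?_)
      rw [mem_filter, mem_sdiff] at hw
      exact mem_sdiff.2 ⟨mem_nbhd.2 hw.2, hw.1.2⟩

lemma Front.not_adj (hG : IsBipartiteWith G S) (hf : Front G S d L c P B Z) {x y : V} (hx : x ∈ P)
    (hy : y ∈ P) : ¬ G.Adj x y := fun hxy =>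
  hf.subset_opp x hx ((hG hxy).2 (hf.subset_opp y hy))

lemma Front.disjoint (hf : Front G S d L c P B Z) : Disjoint P B :=
  disjoint_left.2 fun v hvP hvB => hf.subset_opp v hvP (hf.subset_side v hvB)

lemma Front.interedges_subset (hG : IsBipartiteWith G S) (hf : Front G S d L c P B Z)
    {X : Finset V} (hX : X ⊆ P) :
    G.interedges X (X ∪ Z)ᶜ ⊆ G.interedges X (B \ Z) ∪ G.interedges P (P ∪ B ∪ Z)ᶜ := by
  intro e he
  simp only [G.mem_interedges_iff, mem_union, mem_compl, mem_sdiff, not_or] at he ⊢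
  have : e.2 ∉ P := fun h => hf.not_adj hG (hX he.1) h he.2.2
  have := hX he.1
  tauto

section Growth

variable (hs : Scale (Fintype.card V) d L r) (hG : IsBipartiteWith G S) (hE : Expands G d L)
  (hf : Front G S d L c P B Z) (hc : d * L ^ 6 ≤ c) (hZ : #Z ≤ c / (100 * L ^ 2))

include hs hG hf in
lemma card_interedges_le_of_poor {X : Finset V} (hXP : X ⊆ P)
    (hX : ∀ x ∈ X, (#{b ∈ B \ Z | G.Adj b x} : ℝ) ≤ r ^ 2) (hcX : c / (25 * L) ≤ #X) :
    (#(G.interedges X (X ∪ Z)ᶜ) : ℝ) ≤ d * #X / L := by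
  have hL := hs.L_pos
  have hd := hs.d_pos
  have hBX : (#(G.interedges X (B \ Z)) : ℝ) ≤ #X * r ^ 2 := card_interedges_le_card_mul hX
  have hrL : r ^ 2 * (4 * L) ≤ d := by
    have hrL := hs.mul_pow_le_r (a := 1) (k := 4) (by simp) (by norm_num)
    calc r ^ 2 * (4 * L) ≤ r ^ 2 * r ^ 2 := by gcongr; nlinarith [hs.r_ge]
      _ = d := by rw [hs.d_eq]; ring
  calc (#(G.interedges X (X ∪ Z)ᶜ) : ℝ)
      ≤ #(G.interedges X (B \ Z)) + #(G.interedges P (P ∪ B ∪ Z)ᶜ) := by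
        exact_mod_cast (card_le_card (hf.interedges_subset hG hXP)).trans (card_union_le _ _)
    _ ≤ #X * r ^ 2 + d * c / (100 * L ^ 2) := add_le_add hBX hf.few_edges
    _ = #X * (r ^ 2 * (4 * L)) / (4 * L) + d * (c / (25 * L)) / (4 * L) := by field_simp; ring
    _ ≤ #X * d / (4 * L) + d * #X / (4 * L) := by gcongr
    _ = d * #X / L / 2 := by field_simp; ring
    _ ≤ d * #X / L := half_le_self (by positivity)

include hs hG hE hf hc hZ in
lemma card_poor_le (hcn : c ≤ 2 * Fintype.card V) :
    (#(P \ rich G (B \ Z) (r ^ 2)) : ℝ) ≤ c / (20 * L) := by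
  have hL := hs.le_L
  have hd := hs.d_pos
  have hc0 : 0 < c := lt_of_lt_of_le (by positivity) hc
  by_contra! hpoor
  set m := ⌈c / (25 * L)⌉₊
  have hm : c / (25 * L) ≤ m := Nat.le_ceil _
  have hdL : 4 * (d * L) ≤ c / (25 * L) := by
    rw [le_div_iff₀ (by positivity)]
    linarith [hs.mul_le_of_mul_pow_le (a := 2) (by simp) hc, mul_pos hd (pow_pos hs.L_pos 2)]
  have hm' : (m : ℝ) ≤ c / (20 * L) := by
    have : (1 : ℝ) ≤ d * L := by nlinarith [hs.mul_r_le_d, hs.r_ge]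
    linarith [Nat.ceil_lt_add_one (a := c / (25 * L)) (by positivity),
      show c / (20 * L) = c / (25 * L) + c / (25 * L) / 4 by field_simp; ring]
  obtain ⟨X, hX, hXm⟩ := exists_subset_card_eq (by exact_mod_cast hm'.trans hpoor.le)
  rw [← hXm] at hm hm'
  have hXn : (#X : ℝ) ≤ Fintype.card V / 2 := by
    refine hm'.trans ?_
    rw [div_le_iff₀ (by positivity)]
    nlinarith [Nat.cast_nonneg (α := ℝ) (Fintype.card V)]
  have hXZ := hE X Z (by linarith [mul_pos hd hs.L_pos]) hXn <|
    card_interedges_le_of_poor hs hG hf (hX.trans sdiff_subset)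
      (fun x hx => (not_le.1 (mem_rich.not.1 (mem_sdiff.1 (hX hx)).2)).le) hm
  have hlt : c / (100 * L ^ 2) < #X / L := by
    calc c / (100 * L ^ 2) = c / (25 * L) / L / 4 := by field_simp; ring
      _ ≤ #X / L / 4 := by gcongr
      _ < #X / L := div_lt_self (div_pos (by linarith [mul_pos hd hs.L_pos]) hs.L_pos) (by norm_num)
  linarith

include hG hf in
lemma Front.card_interedges_le {X Q : Finset V} (hX : X ⊆ P ∪ B \ Z) :
    #(G.interedges X (X ∪ ((B \ Z ∪ Q ∪ Z) \ X))ᶜ)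
      ≤ #(G.interedges P (P ∪ B ∪ Z)ᶜ) + #(G.interedges (B \ Z) (Q ∪ Z)ᶜ) := by
  refine (card_le_card fun e he => ?_).trans (card_union_le _ _)
  simp only [G.mem_interedges_iff, mem_union, mem_compl, mem_sdiff, not_or] at he ⊢
  have hmem := hX he.1
  simp only [mem_union, mem_sdiff] at hmem
  have : e.1 ∈ P → e.2 ∉ P := fun h h' => hf.not_adj hG h h' he.2.2
  tauto

lemma card_add_card_sdiff_le {X Q : Finset V} (hX : X ⊆ P ∪ B) (hQ : rich G B (r ^ 2) \ Z ⊆ Q) :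
    #X + #((B ∪ Q ∪ Z) \ X) ≤ #B + #Q + #Z + #(P \ rich G B (r ^ 2)) := by
  set W := B ∪ Q ∪ Z
  have hsub : X ⊆ W ∩ X ∪ P \ rich G B (r ^ 2) := fun x hx => by
    have hmem := hX hx
    have := @hQ x
    simp only [W, mem_union, mem_inter, mem_sdiff] at hmem this ⊢
    tauto
  have hXW := (card_le_card hsub).trans (card_union_le _ _)
  have hW : #W ≤ #B + #Q + #Z := (card_union_le _ _).trans (by gcongr; exact card_union_le _ _)
  have := card_sdiff_add_card_inter W X
  omega

include hs hf hc hZ in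
lemma exists_subset_card_between (huc : u ≤ c) (hun : u ≤ Fintype.card V / 2) :
    ∃ X ⊆ P ∪ B \ Z, u - c / (1000 * L) ≤ #X ∧ (#X : ℝ) ≤ Fintype.card V / 2 := by
  have hL := hs.le_L
  have hd := hs.d_pos
  have hc0 : 0 < c := lt_of_lt_of_le (by positivity) hc
  obtain ⟨X, hX, hXk⟩ := exists_subset_card_eq (min_le_left #(P ∪ B \ Z) (Fintype.card V / 2))
  have hBZ : (#B : ℝ) ≤ #(B \ Z) + #Z := by
    exact_mod_cast Nat.sub_le_iff_le_add.1 (le_card_sdiff Z B)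
  have hcard : (#(P ∪ B \ Z) : ℝ) = #P + #(B \ Z) := by
    exact_mod_cast card_union_of_disjoint (hf.disjoint.mono_right sdiff_subset)
  have hsmall : c / (100 * L ^ 2) ≤ c / (1000 * L) :=
    div_le_div_of_nonneg_left hc0.le (by positivity) (by nlinarith)
  have hone : 1 ≤ c / (1000 * L) := by
    rw [le_div_iff₀ (by positivity)]
    have := hs.mul_le_of_mul_pow_le (a := 1) (by simp) hc
    nlinarith [hs.mul_r_le_d, hs.r_ge]
  have hhalf : (Fintype.card V : ℝ) ≤ 2 * (Fintype.card V / 2 : ℕ) + 1 := by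
    exact_mod_cast (by lia : Fintype.card V ≤ 2 * (Fintype.card V / 2) + 1)
  refine ⟨X, hX, ?_, ?_⟩
  · rw [hXk, Nat.cast_min, le_min_iff]
    constructor <;> linarith [hf.le_card]
  · calc (#X : ℝ) ≤ (Fintype.card V / 2 : ℕ) := by
          rw [hXk]; exact_mod_cast min_le_right _ _
      _ ≤ Fintype.card V / 2 := Nat.cast_div_le

include hs hG hf hc in
lemma Front.card_interedges_le_of_subset_union {X Q : Finset V} (hX : X ⊆ P ∪ B \ Z)
    (hcX : 0.99 * c ≤ #X)
    (hedges : (#(G.interedges (B \ Z) (Q ∪ Z)ᶜ) : ℝ) ≤ d * c / (100 * L ^ 2)) :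
    (#(G.interedges X (X ∪ ((B \ Z ∪ Q ∪ Z) \ X))ᶜ) : ℝ) ≤ d * #X / L := by
  have hL := hs.le_L
  have hd := hs.d_pos
  have hc0 : 0 < c := lt_of_lt_of_le (by positivity) hc
  calc (#(G.interedges X (X ∪ ((B \ Z ∪ Q ∪ Z) \ X))ᶜ) : ℝ)
      ≤ #(G.interedges P (P ∪ B ∪ Z)ᶜ) + #(G.interedges (B \ Z) (Q ∪ Z)ᶜ) := by
        exact_mod_cast hf.card_interedges_le hG hX
    _ ≤ d * c / (100 * L ^ 2) + d * c / (100 * L ^ 2) := add_le_add hf.few_edges hedges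
    _ = d * (2 * c / (100 * L)) / L := by field_simp; ring
    _ ≤ d * (0.99 * c) / L := by
        gcongr
        rw [div_le_iff₀ (by positivity)]
        nlinarith
    _ ≤ d * #X / L := by gcongr

include hs hG hE hf hc hZ in
lemma growth_le_card_add_card {Q : Finset V} (huc : u ≤ c) (hun : u ≤ Fintype.card V / 2)
    (hcu : c ≤ (1 + 1 / (4 * L)) * u) (hQ : rich G (B \ Z) (r ^ 2) \ Z ⊆ Q)
    (hedges : (#(G.interedges (B \ Z) (Q ∪ Z)ᶜ) : ℝ) ≤ d * c / (100 * L ^ 2)) :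
    (1 + 1 / (4 * L)) * u ≤ #(B \ Z) + #Q := by
  have hL := hs.le_L
  have hd := hs.d_pos
  have hc0 : 0 < c := lt_of_lt_of_le (by positivity) hc
  set q := c / L with hq
  have hqc : 1000 * q ≤ c := by
    rw [hq, mul_div_assoc', div_le_iff₀ hs.L_pos]; nlinarith
  have hu : c ≤ u + q / 4 := by
    calc c ≤ u + u / (4 * L) := by linarith [show (1 + 1 / (4 * L)) * u = u + u / (4 * L) by ring]
      _ ≤ u + c / (4 * L) := by gcongr
      _ = u + q / 4 := by rw [hq]; ring
  have hZq : c / (100 * L ^ 2) ≤ q / 100000 := by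
    rw [hq, div_div]
    exact div_le_div_of_nonneg_left hc0.le (by positivity) (by nlinarith)
  obtain ⟨X, hX, huX, hXn⟩ := exists_subset_card_between hs hf hc hZ huc hun
  have huX' : u - q / 1000 ≤ #X := by
    rwa [show c / (1000 * L) = q / 1000 by rw [hq]; ring] at huX
  have hcX : 0.99 * c ≤ #X := by linarith
  have hout := hf.card_interedges_le_of_subset_union hs hG hc hX hcX hedges
  have hXL := hE X _ (by linarith [hs.mul_le_of_mul_pow_le (a := 1) (by simp) hc]) hXn hout
  have hcount : (#X : ℝ) + #((B \ Z ∪ Q ∪ Z) \ X) ≤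
      #(B \ Z) + #Q + #Z + #(P \ rich G (B \ Z) (r ^ 2)) := by
    exact_mod_cast card_add_card_sdiff_le hX hQ
  have hpoor := card_poor_le hs hG hE hf hc hZ (by linarith)
  have hXq : 0.99 * q ≤ #X / L := by
    rw [hq, mul_div_assoc']; gcongr
  have huq : (1 + 1 / (4 * L)) * u ≤ u + q / 4 := by
    calc (1 + 1 / (4 * L)) * u = u + u / (4 * L) := by ring
      _ ≤ u + c / (4 * L) := by gcongr
      _ = u + q / 4 := by rw [hq]; ring
  linarith [show c / (20 * L) = q / 20 by rw [hq]; ring, div_pos hc0 hs.L_pos]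

include hs in
lemma card_interedges_compl_rich_le
    (hN : (#(nbhd G B \ Z) : ℝ) ≤ r ^ 2 / (100 * L ^ 2) * c) :
    (#(G.interedges B (rich G B (r ^ 2) \ Z ∪ Z)ᶜ) : ℝ) ≤ d * c / (100 * L ^ 2) := by
  calc (#(G.interedges B (rich G B (r ^ 2) \ Z ∪ Z)ᶜ) : ℝ)
      ≤ #((rich G B (r ^ 2) \ Z ∪ Z)ᶜ ∩ nbhd G B) * r ^ 2 := by
        refine card_interedges_le fun w hw => ?_
        rw [sdiff_union_self_eq_union, mem_compl, mem_union, not_or, mem_rich, not_le] at hw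
        exact hw.1.le
    _ ≤ #(nbhd G B \ Z) * r ^ 2 := by
        gcongr
        intro w
        simp only [mem_inter, mem_compl, mem_union, mem_sdiff]
        tauto
    _ ≤ r ^ 2 / (100 * L ^ 2) * c * r ^ 2 := by gcongr
    _ = d * c / (100 * L ^ 2) := by rw [hs.d_eq]; ring

include hs hG hE hf hc hZ in
theorem Front.exists_step (huc : u ≤ c) (hun : u ≤ Fintype.card V / 2)
    (hcu : c ≤ (1 + 1 / (4 * L)) * u) :
    ∃ A ⊆ B \ Z, (#A : ℝ) ≤ c / r ∧ ∃ P' ⊆ B, ∃ B' ⊆ nbhd G A \ Z,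
      Front G Sᶜ d L ((1 + 1 / (4 * L)) * u) P' B' Z := by
  set c' := (1 + 1 / (4 * L)) * u
  have hd := hs.d_pos
  have hdc : d ≤ c := by
    linarith [hs.mul_le_of_mul_pow_le (a := 0) (by simp) hc]
  have hc'c : c' ≤ 2 * c := by
    have : 1 / (4 * L) ≤ 1 := (div_le_one (by linarith [hs.L_pos])).2 (by linarith [hs.le_L])
    have hu0 : 0 < u := (mul_pos_iff_of_pos_left (by linarith [one_div_pos.2 (mul_pos four_pos
      hs.L_pos)])).1 ((hd.trans_le hdc).trans_le hcu)
    nlinarith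
  have hBc : (#(B \ Z) : ℝ) ≤ 2 * c :=
    le_trans (by exact_mod_cast card_le_card sdiff_subset) hf.card_le
  have hside : ∀ A ⊆ B \ Z, ∀ w ∈ nbhd G A, w ∈ Sᶜ := fun A hA =>
    nbhd_subset_compl hG fun a ha => hf.subset_side a (mem_sdiff.1 (hA ha)).1
  have hreset {A Q : Finset V} (hA : A ⊆ B \ Z) (hQ : Q ⊆ nbhd G A \ Z) (hcQ : c' ≤ #Q) :
      ∃ P' ⊆ B, ∃ B' ⊆ nbhd G A \ Z, Front G Sᶜ d L c' P' B' Z := by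
    obtain ⟨B', hB', hfront⟩ := Front.exists_of_card (G := G) (S := Sᶜ) (L := L) hd.le
      (by linarith [hs.mul_r_le_d, hs.r_ge]) hcQ fun v hv => hside A hA v (mem_sdiff.1 (hQ hv)).1
    exact ⟨∅, empty_subset _, B', hB'.trans hQ, hfront Z⟩
  obtain hN | hN := le_total (r ^ 2 / (100 * L ^ 2) * c) (#(nbhd G (B \ Z) \ Z) : ℝ)
  · obtain ⟨A, hAB, hA, hAc⟩ := exists_subset_card_nbhd_ge hs hdc hBc hN
    exact ⟨A, hAB, hA, hreset hAB subset_rfl (by linarith)⟩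
  obtain ⟨A, hAB, hA, hrich⟩ := exists_subset_dominating (G := G) hs hdc hBc
  obtain hbig | hsmall := le_total c' (#(rich G (B \ Z) (r ^ 2) \ Z) : ℝ)
  · exact ⟨A, hAB, hA, hreset hAB (sdiff_subset_sdiff hrich subset_rfl) hbig⟩
  have hedges := card_interedges_compl_rich_le hs hN
  refine ⟨A, hAB, hA, B \ Z, sdiff_subset, _, sdiff_subset_sdiff hrich subset_rfl,
    fun v hv => hside A hAB v (hrich (mem_sdiff.1 hv).1),
    fun v hv => not_not.2 (hf.subset_side v (mem_sdiff.1 hv).1), ?_,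
    growth_le_card_add_card hs hG hE hf hc hZ huc hun hcu subset_rfl hedges, by linarith⟩
  refine le_trans (Nat.cast_le.2 (card_le_card (G.interedges_mono subset_rfl ?_)))
    (hedges.trans (by gcongr))
  exact compl_subset_compl.2 (union_subset_union_left subset_union_right)

end Growth

/-- A front grown in `k` steps from the set `U` while avoiding `W`: the vertices of the front are
the ends of paths from `U` whose other vertices lie in the set `D` of vertices used so far. -/
structure Growth (G : SimpleGraph V) [DecidableRel G.Adj] (S : Set V) (d L c : ℝ) (U W : Finset V)
    (k : ℕ) (P B D : Finset V) : Prop extends Front G S d L c P B (W ∪ D) where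
  disjoint_avoid : Disjoint W D
  reaches : ∀ w ∈ B, Reaches G U D k w
  reaches_pred : ∀ w ∈ P, ∃ j, k = j + 1 ∧ Reaches G U D j w

namespace Growth

variable {U W D : Finset V} {k : ℕ}

lemma mono (hg : Growth G S d L c U W k P B D) {W' : Finset V} (hW : W ⊆ W')
    (hD : Disjoint W' D) : Growth G S d L c U W' k P B D where
  subset_side := hg.subset_side
  subset_opp := hg.subset_opp
  few_edges := le_trans (Nat.cast_le.2 (card_le_card (G.interedges_mono subset_rfl
    (compl_subset_compl.2 (by gcongr))))) hg.few_edges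
  le_card := hg.le_card
  card_le := hg.card_le
  disjoint_avoid := hD
  reaches := hg.reaches
  reaches_pred := hg.reaches_pred

lemma exists_init (hd : 0 ≤ d) (hc : 1 ≤ c) (hcU : c ≤ #U) (hUS : ∀ v ∈ U, v ∈ S) (W : Finset V) :
    ∃ B, Growth G S d L c U W 0 ∅ B ∅ := by
  obtain ⟨B, hBU, hB⟩ := Front.exists_of_card (G := G) (L := L) hd hc hcU hUS
  exact ⟨B, hB _, disjoint_empty_right W, fun w hw => .of_mem (hBU hw), by simp⟩

lemma exists_step (hs : Scale (Fintype.card V) d L r) (hG : IsBipartiteWith G S)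
    (hE : Expands G d L) (hg : Growth G S d L c U W k P B D) (hc : d * L ^ 6 ≤ c)
    (hZ : #(W ∪ D) ≤ c / (100 * L ^ 2)) (huc : u ≤ c) (hun : u ≤ Fintype.card V / 2)
    (hcu : c ≤ (1 + 1 / (4 * L)) * u) :
    ∃ A P' B', Disjoint A (W ∪ D) ∧ (#A : ℝ) ≤ c / r ∧
      Growth G Sᶜ d L ((1 + 1 / (4 * L)) * u) U W (k + 1) P' B' (D ∪ A) := by
  obtain ⟨A, hA, hAc, P', hP', B', hB', hf⟩ := hg.toFront.exists_step hs hG hE hc hZ huc hun hcu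
  have hAZ : Disjoint A (W ∪ D) := disjoint_of_subset_left hA sdiff_disjoint
  refine ⟨A, P', B', hAZ, hAc, ⟨hf.subset_side, hf.subset_opp, le_trans ?_ hf.few_edges,
    hf.le_card, hf.card_le⟩, ?_, fun w hw => ?_, fun w hw => ⟨k, rfl, ?_⟩⟩
  · exact Nat.cast_le.2 (card_le_card (G.interedges_mono subset_rfl
      (compl_subset_compl.2 (by gcongr; exact subset_union_left))))
  · exact disjoint_union_right.2 ⟨hg.disjoint_avoid, (disjoint_union_right.1 hAZ).1.symm⟩
  · obtain ⟨hwN, hwZ⟩ := mem_sdiff.1 (hB' hw)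
    obtain ⟨a, ha, haw⟩ := mem_nbhd.1 hwN
    exact (hg.reaches a (mem_sdiff.1 (hA ha)).1).extend haw
      (fun hwD => hwZ (mem_union_right W hwD)) subset_union_left (mem_union_right D ha)
  · exact (hg.reaches w (hP' hw)).mono subset_union_left

lemma card_layers (hg : Growth G S d L c U W k P B D) :
    c ≤ #(P ∪ B) := by
  rw [card_union_of_disjoint hg.toFront.disjoint]
  exact_mod_cast hg.le_card

end Growth

/-- The prescribed size of a front after `k` steps: it starts with `d * L ^ 6` and grows by a
factor `1 + 1 / (4 * L)` in each step until it exceeds `n / 2` by that factor. -/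
noncomputable def frontSize (n : ℕ) (d L : ℝ) (k : ℕ) : ℝ :=
  min (d * L ^ 6 * (1 + 1 / (4 * L)) ^ k) ((1 + 1 / (4 * L)) * (n / 2))

section FrontSize

variable {n k : ℕ}

lemma frontSize_succ (hL : 0 < L) :
    frontSize n d L (k + 1) = (1 + 1 / (4 * L)) * min (frontSize n d L k) (n / 2) := by
  have hq : 1 ≤ 1 + 1 / (4 * L) := by simpa using hL.le
  have hq0 : 0 ≤ 1 + 1 / (4 * L) := by linarith
  rw [frontSize, frontSize, mul_min_of_nonneg _ _ hq0, mul_min_of_nonneg _ _ hq0, min_assoc,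
    min_eq_right (a := (1 + 1 / (4 * L)) * ((1 + 1 / (4 * L)) * (n / 2)))]
  · ring_nf
  · exact le_mul_of_one_le_left (by positivity) hq

lemma frontSize_le_succ (hd : 0 ≤ d) (hL : 0 < L) : frontSize n d L k ≤ frontSize n d L (k + 1) :=
  min_le_min_right _ <| mul_le_mul_of_nonneg_left
    (pow_le_pow_right₀ (by simpa using hL.le) k.le_succ) (by positivity)

lemma le_frontSize (hs : Scale n d L r) : d * L ^ 6 ≤ frontSize n d L k := by
  have hq : 1 ≤ 1 + 1 / (4 * L) := by simpa using hs.L_pos.le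
  have hd := hs.d_pos
  have hL := hs.L_pos
  refine le_min (le_mul_of_one_le_right (by positivity) (one_le_pow₀ hq)) ?_
  calc d * L ^ 6 ≤ n / 2 := by
        linarith [hs.mul_le_of_mul_pow_le (a := 6) (by simp) hs.mul_le, mul_pos hd (pow_pos hL 6)]
    _ ≤ (1 + 1 / (4 * L)) * (n / 2) := le_mul_of_one_le_left (by positivity) hq

lemma frontSize_eq (hs : Scale n d L r) (hk : 8 * L ^ 2 ≤ k) :
    frontSize n d L k = (1 + 1 / (4 * L)) * (n / 2) := by
  have hL := hs.L_pos
  have hd := hs.d_pos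
  refine min_eq_right ?_
  have hexp : Real.exp (1 / (8 * L)) ≤ 1 + 1 / (4 * L) := by
    have hx1 : 1 / (8 * L) ≤ 1 / 2 := one_div_le_one_div_of_le two_pos (by linarith [hs.le_L])
    refine (Real.exp_bound_div_one_sub_of_interval (by positivity) (by linarith)).trans ?_
    rw [show 1 / (4 * L) = 2 * (1 / (8 * L)) by field_simp; norm_num, div_le_iff₀ (by linarith)]
    nlinarith [show 0 < 1 / (8 * L) by positivity]
  have hq : 1 / (4 * L) ≤ 1 := (div_le_one (by positivity)).2 (by linarith [hs.le_L])
  calc (1 + 1 / (4 * L)) * (n / 2) ≤ (1 + 1) * (n / 2) := by gcongr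
    _ = n := by ring
    _ ≤ d * Real.exp L := hs.le_exp
    _ = d * Real.exp (1 / (8 * L) * (8 * L ^ 2)) := by congr 2; field_simp
    _ ≤ d * Real.exp (1 / (8 * L) * k) := by gcongr
    _ = d * Real.exp (1 / (8 * L)) ^ k := by rw [← Real.exp_nat_mul]; ring_nf
    _ ≤ d * L ^ 6 * (1 + 1 / (4 * L)) ^ k := by
      gcongr
      exact le_mul_of_one_le_right hd.le (one_le_pow₀ (by linarith [hs.le_L]))

lemma add_le_frontSize_div {w x : ℝ} (hs : Scale n d L r) (hw : w ≤ d * L ^ 4 / 200)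
    (hx : x ≤ 20 * L ^ 2) :
    w + x * frontSize n d L k / r ≤ frontSize n d L k / (100 * L ^ 2) := by
  have hL := hs.L_pos
  have hr := hs.r_pos
  set c := frontSize n d L k
  have hc : d * L ^ 6 ≤ c := le_frontSize hs
  have hc0 : 0 < c := lt_of_lt_of_le (mul_pos hs.d_pos (pow_pos hL 6)) hc
  have hwc : w ≤ c / (200 * L ^ 2) := by
    rw [le_div_iff₀ (by positivity)]
    nlinarith [mul_le_mul_of_nonneg_right hw (by positivity : 0 ≤ 200 * L ^ 2)]
  have hxc : x * c / r ≤ c / (200 * L ^ 2) := by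
    have : 4000 * L ^ 4 ≤ r := by
      nlinarith [hs.mul_pow_le_r (a := 5) (by simp) le_rfl, hs.le_L, pow_pos hL 4]
    rw [div_le_div_iff₀ hr (by positivity)]
    calc x * c * (200 * L ^ 2) ≤ 20 * L ^ 2 * c * (200 * L ^ 2) := by gcongr
      _ = c * (4000 * L ^ 4) := by ring
      _ ≤ c * r := by gcongr
  calc w + x * c / r ≤ c / (200 * L ^ 2) + c / (200 * L ^ 2) := add_le_add hwc hxc
    _ = c / (100 * L ^ 2) := by field_simp; norm_num

end FrontSize

/-! ### Connecting large sets -/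

section Connect

variable {Y : Set V} {U C W : Finset V}

lemma Growth.exists_step_right {S' : Set V} {P₁ B₁ D₁ P₂ B₂ D₂ : Finset V} {k l : ℕ} {m : ℝ}
    (hs : Scale (Fintype.card V) d L r) (hS : IsBipartiteWith G S) (hE : Expands G d L)
    (hW : #W ≤ d * L ^ 4 / 200) (hg₁ : Growth G S' d L c U (W ∪ D₂) l P₁ B₁ D₁)
    (hg₂ : Growth G S d L (frontSize (Fintype.card V) d L k) C (W ∪ D₁) k P₂ B₂ D₂)
    (hm : m ≤ 20 * L ^ 2) (hD : #D₁ + #D₂ ≤ m * frontSize (Fintype.card V) d L k / r) :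
    ∃ P' B' D', Growth G S' d L c U (W ∪ D') l P₁ B₁ D₁ ∧
      Growth G Sᶜ d L (frontSize (Fintype.card V) d L (k + 1)) C (W ∪ D₁) (k + 1) P' B' D' ∧
      #D₁ + #D' ≤ (m + 1) * frontSize (Fintype.card V) d L k / r := by
  set n := Fintype.card V
  have hL := hs.L_pos
  have hcard : (#(W ∪ D₁ ∪ D₂) : ℝ) ≤ frontSize n d L k / (100 * L ^ 2) := by
    have h₁ : (#(W ∪ D₁ ∪ D₂) : ℝ) ≤ #W + #D₁ + #D₂ := by
      exact_mod_cast (card_union_le _ _).trans (by gcongr; exact card_union_le _ _)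
    linarith [add_le_frontSize_div (k := k) hs hW hm]
  have hcu := frontSize_le_succ (n := n) (k := k) hs.d_pos.le hL
  rw [frontSize_succ hL] at hcu
  obtain ⟨A, P', B', hA, hAc, hg'⟩ := hg₂.exists_step hs hS hE (le_frontSize hs) hcard
    (min_le_left _ _) (min_le_right _ (n / 2 : ℝ)) hcu
  refine ⟨P', B', D₂ ∪ A, hg₁.mono (by grind) ?_, by rwa [frontSize_succ hL], ?_⟩
  · have := hg₁.disjoint_avoid
    rw [disjoint_left] at this hA ⊢
    grind
  · calc (#D₁ + #(D₂ ∪ A) : ℝ) ≤ #D₁ + #D₂ + #A := by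
          exact_mod_cast (by linarith [card_union_le D₂ A])
      _ ≤ m * frontSize n d L k / r + frontSize n d L k / r := add_le_add hD hAc
      _ = (m + 1) * frontSize n d L k / r := by ring

lemma Growth.exists_pair (hs : Scale (Fintype.card V) d L r) (hY : IsBipartiteWith G Y)
    (hE : Expands G d L) (hU : d * L ^ 6 ≤ #U) (hC : d * L ^ 6 ≤ #C) (hUY : ∀ v ∈ U, v ∈ Y)
    (hCY : ∀ v ∈ C, v ∈ Y) (hW : #W ≤ d * L ^ 4 / 200) (k : ℕ) (hk : 2 * k ≤ 20 * L ^ 2) :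
    ∃ S, IsBipartiteWith G S ∧ ∃ P₁ B₁ D₁ P₂ B₂ D₂,
      Growth G S d L (frontSize (Fintype.card V) d L k) U (W ∪ D₂) k P₁ B₁ D₁ ∧
      Growth G S d L (frontSize (Fintype.card V) d L k) C (W ∪ D₁) k P₂ B₂ D₂ ∧
      #D₁ + #D₂ ≤ 2 * k * frontSize (Fintype.card V) d L k / r := by
  have hL := hs.L_pos
  have hd := hs.d_pos
  have hr := hs.r_pos
  induction k with
  | zero =>
    have hc : frontSize (Fintype.card V) d L 0 ≤ d * L ^ 6 := by simp [frontSize]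
    have hc1 : 1 ≤ frontSize (Fintype.card V) d L 0 := by
      linarith [le_frontSize (k := 0) hs, hs.mul_r_le_d, hs.r_ge,
        hs.mul_le_of_mul_pow_le (a := 0) (b := 6) (by simp) le_rfl]
    obtain ⟨B₁, hB₁⟩ := exists_init (G := G) (L := L) hd.le hc1 (hc.trans hU) hUY (W ∪ ∅)
    obtain ⟨B₂, hB₂⟩ := exists_init (G := G) (L := L) hd.le hc1 (hc.trans hC) hCY (W ∪ ∅)
    exact ⟨Y, hY, ∅, B₁, ∅, ∅, B₂, ∅, hB₁, hB₂, by simp⟩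
  | succ k ih =>
    push_cast at hk
    obtain ⟨S, hS, P₁, B₁, D₁, P₂, B₂, D₂, hg₁, hg₂, hD⟩ := ih (by linarith)
    obtain ⟨P₂', B₂', D₂', hg₁', hg₂', hD'⟩ := hg₁.exists_step_right (m := 2 * k) hs hS hE hW hg₂
      (by linarith) hD
    obtain ⟨P₁', B₁', D₁', hg₂'', hg₁'', hD''⟩ :=
      hg₂'.exists_step_right (m := 2 * k + 1) hs hS hE hW hg₁' (by linarith) (by rwa [add_comm])
    refine ⟨Sᶜ, hS.compl, P₁', B₁', D₁', P₂', B₂', D₂', hg₁'', hg₂'', ?_⟩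
    rw [add_comm (#D₁' : ℝ)]
    refine hD''.trans ?_
    push_cast
    rw [show (2 * k + 1 + 1 : ℝ) = 2 * (k + 1) by ring]
    gcongr
    exact frontSize_le_succ hd.le hL

lemma exists_mem_inter_notMem (hs : Scale (Fintype.card V) d L r) {X X' Z : Finset V}
    (hX : (1 + 1 / (4 * L)) * (Fintype.card V / 2) ≤ #X)
    (hX' : (1 + 1 / (4 * L)) * (Fintype.card V / 2) ≤ #X')
    (hZ : #Z ≤ (1 + 1 / (4 * L)) * (Fintype.card V / 2) / (100 * L ^ 2)) :
    ∃ w ∈ X ∩ X', w ∉ Z := by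
  have hL := hs.le_L
  have hn : (0 : ℝ) < Fintype.card V := lt_of_lt_of_le
    (mul_pos hs.d_pos (pow_pos hs.L_pos 40)) hs.mul_le
  generalize hcardV : (Fintype.card V : ℝ) = n at *
  have hcard : (#X : ℝ) + #X' ≤ n + #(X ∩ X') := by
    rw [← Nat.cast_add, ← card_union_add_card_inter, Nat.cast_add]
    gcongr
    exact hcardV ▸ Nat.cast_le.2 (card_le_univ _)
  refine exists_mem_notMem_of_card_lt_card (Nat.cast_lt (α := ℝ).1 ?_)
  calc (#Z : ℝ) ≤ (1 + 1 / (4 * L)) * (n / 2) / (100 * L ^ 2) := hZ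
    _ < n / (4 * L) := by
      rw [div_lt_div_iff₀ (by positivity) (by positivity)]
      have : (1 + 1 / (4 * L)) * (4 * L) = 4 * L + 1 := by field_simp
      nlinarith [mul_pos hn (by linarith : 0 < L)]
    _ = 2 * ((1 + 1 / (4 * L)) * (n / 2)) - n := by field_simp; ring
    _ ≤ #(X ∩ X') := by linarith

/-- Both fronts grow for `T` steps from the same side of the bipartition, and one of them for one
more step, after which they must meet. The last layers then lie on opposite sides, so that the two
paths to a common vertex have lengths `T` and `T`, or `T - 1` and `T + 1`. -/
theorem exists_pathOn_of_card_ge (hs : Scale (Fintype.card V) d L r) (hY : IsBipartiteWith G Y)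
    (hE : Expands G d L) (hU : d * L ^ 6 ≤ #U) (hC : d * L ^ 6 ≤ #C) (hUY : ∀ v ∈ U, v ∈ Y)
    (hCY : ∀ v ∈ C, v ∈ Y) (hW : #W ≤ d * L ^ 4 / 200) {T : ℕ} (hT : 8 * L ^ 2 ≤ T)
    (hT' : T ≤ 9 * L ^ 2) :
    ∃ u ∈ U, ∃ v ∈ C, ∃ Q, PathOn G (2 * T) Q u v ∧ Disjoint Q W := by
  have hL := hs.le_L
  obtain ⟨S, hS, P₁, B₁, D₁, P₂, B₂, D₂, hg₁, hg₂, hD⟩ :=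
    Growth.exists_pair hs hY hE hU hC hUY hCY hW T (by nlinarith)
  obtain ⟨P', B', D', hg₁', hg', hD'⟩ :=
    hg₁.exists_step_right (m := 2 * T) hs hS hE hW hg₂ (by nlinarith) hD
  have hsize := frontSize_eq hs hT
  have hsize' := frontSize_eq (k := T + 1) hs (by push_cast; linarith)
  have hZ := add_le_frontSize_div (k := T) (x := 2 * T + 1) hs hW (by nlinarith)
  obtain ⟨w, hw, hwZ⟩ := exists_mem_inter_notMem (Z := W ∪ D₁ ∪ D') hs
    (hsize ▸ hg₁'.card_layers) (hsize' ▸ hg'.card_layers) (by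
      rw [← hsize]
      have : (#(W ∪ D₁ ∪ D') : ℝ) ≤ #W + #D₁ + #D' := by
        exact_mod_cast (card_union_le _ _).trans (by gcongr; exact card_union_le _ _)
      linarith)
  suffices ∃ k l, k + l = 2 * T ∧ Reaches G U D₁ k w ∧ Reaches G C D' l w by
    obtain ⟨k, l, hkl, hk, hl⟩ := this
    obtain ⟨u, hu, v, hv, Q, hQ, hp⟩ := hk.glue hl
      (disjoint_of_subset_left subset_union_right hg₁'.disjoint_avoid).symm
    refine ⟨u, hu, v, hv, Q, hkl ▸ hp, disjoint_left.2 fun x hxQ hxW => ?_⟩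
    have h₁ := disjoint_left.1 hg₁'.disjoint_avoid (mem_union_left D' hxW)
    have h₂ := disjoint_left.1 hg'.disjoint_avoid (mem_union_left D₁ hxW)
    grind
  obtain ⟨hw, hw'⟩ := mem_inter.1 hw
  rcases mem_union.1 hw with hP₁ | hB₁ <;> rcases mem_union.1 hw' with hP' | hB'
  · exact absurd hP' fun h => hg'.subset_opp w h (hg₁'.subset_opp w hP₁)
  · obtain ⟨j, rfl, hj⟩ := hg₁'.reaches_pred w hP₁
    exact ⟨j, j + 1 + 1, by ring, hj, hg'.reaches w hB'⟩
  · obtain ⟨j, hj, hreach⟩ := hg'.reaches_pred w hP'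
    obtain rfl : T = j := by omega
    exact ⟨T, T, by ring, hg₁'.reaches w hB₁, hreach⟩
  · exact absurd (hg₁'.subset_side w hB₁) (hg'.subset_side w hB')

end Connect

/-! ### Building the subdivision -/

/-- The situation in which the subdivision is built: an expanding bipartite graph in the numerical
regime `Scale`, in which the side `Yᶜ` contains at least half of the vertices. -/
structure Setting (G : SimpleGraph V) [DecidableRel G.Adj] (Y : Set V) (d L r : ℝ) : Prop
    extends Scale (Fintype.card V) d L r where
  bipartite : IsBipartiteWith G Y
  expands : Expands G d L
  half_le : (Fintype.card V : ℝ) / 2 ≤ (Yᶜ.ncard : ℝ)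

variable {Y : Set V} {s m q T : ℕ} {α β : Type*}

namespace Setting

lemma exists_card_adj_ge (hS : Setting G Y d L r) (hZ : (#Z : ℝ) < Fintype.card V / (8 * L)) :
    ∃ v, v ∉ Y ∧ v ∉ Z ∧ d / L ≤ #{w ∈ Zᶜ | G.Adj w v} := by
  classical
  by_contra! hpoor
  have hL := hS.le_L
  have hdL : 1000 * (d * L ^ 1) ≤ Fintype.card V := hS.mul_le_of_mul_pow_le (by simp) hS.mul_le
  have hd : 1000 ≤ d * L ^ 1 := by nlinarith [hS.mul_r_le_d, hS.r_ge]
  have hsdiff : (Fintype.card V : ℝ) / 2 ≤ #(Yᶜ.toFinset \ Z) + #Z := by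
    refine hS.half_le.trans ?_
    rw [Set.ncard_eq_toFinset_card']
    exact_mod_cast Nat.sub_le_iff_le_add.1 (le_card_sdiff Z _)
  have hZ' : (#Z : ℝ) ≤ Fintype.card V / 8 :=
    hZ.le.trans (div_le_div_of_nonneg_left (by positivity) (by norm_num) (by linarith))
  have hceil := Nat.ceil_lt_add_one (a := (Fintype.card V : ℝ) / 4) (by positivity)
  obtain ⟨Q, hQ, hcard⟩ := exists_subset_card_eq (s := Yᶜ.toFinset \ Z)
    (n := ⌈(Fintype.card V : ℝ) / 4⌉₊) (by rify; linarith)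
  have hQ4 : (Fintype.card V : ℝ) / 4 ≤ #Q := hcard ▸ Nat.le_ceil _
  have hfew : (#(G.interedges Q (Q ∪ Z)ᶜ) : ℝ) ≤ #Q * (d / L) := by
    refine card_interedges_le_card_mul fun x hx => ?_
    have hx' := mem_sdiff.1 (hQ hx)
    refine le_trans ?_ (hpoor x (by simpa using hx'.1) hx'.2).le
    gcongr
    exact subset_union_right
  have hQZ := hS.expands Q Z (by linarith) (by rw [hcard]; linarith)
    (hfew.trans_eq (by ring))
  have : (Fintype.card V : ℝ) / 4 / L ≤ #Q / L := by gcongr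
  rw [div_div] at this
  have : (Fintype.card V : ℝ) / (8 * L) ≤ Fintype.card V / (4 * L) := by gcongr; norm_num
  linarith

lemma exists_star_disjoint (hS : Setting G Y d L r) (hs : s ≤ d / L)
    (hZ : (#Z : ℝ) < Fintype.card V / (8 * L)) : ∃ σ : GraphStar G Y s, Disjoint σ.verts Z := by
  obtain ⟨v, hvY, hvZ, hv⟩ := hS.exists_card_adj_ge hZ
  obtain ⟨A, hA, hcard⟩ := exists_subset_card_eq (Nat.cast_le.1 (hs.trans hv))
  refine ⟨⟨v, A, hvY, hcard, fun w hw => (mem_filter.1 (hA hw)).2.symm⟩, ?_⟩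
  exact disjoint_insert_left.2 ⟨hvZ, disjoint_left.2 fun w hw =>
    mem_compl.1 (mem_filter.1 (hA hw)).1⟩

lemma exists_stars (hS : Setting G Y d L r) (hs : s ≤ d / L)
    (hZ : #Z + q * (s + 1) < Fintype.card V / (8 * L)) :
    ∃ σ : Fin q → GraphStar G Y s, (∀ i, Disjoint (σ i).verts Z) ∧
      Pairwise (Function.onFun Disjoint fun i => (σ i).verts) := by
  suffices hext : ∀ Z', #Z' ≤ Fintype.card (Fin q) * (s + 1) →
      ∃ σ : GraphStar G Y s, Disjoint σ.verts Z ∧ Disjoint σ.verts Z' from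
    exists_pairwise_disjoint GraphStar.verts (fun σ _ => σ.card_verts_le) hext
  intro Z' hZ'
  rw [Fintype.card_fin] at hZ'
  have hcard : (#(Z ∪ Z') : ℝ) ≤ #Z + q * (s + 1) := by
    exact_mod_cast (card_union_le Z Z').trans (by gcongr)
  obtain ⟨σ, hσ⟩ := hS.exists_star_disjoint hs (hcard.trans_lt hZ)
  exact ⟨σ, disjoint_union_right.1 hσ⟩

lemma exists_starPath (hS : Setting G Y d L r) {σ : α → GraphStar G Y s} {τ : β → GraphStar G Y m}
    {A : Finset α} {B : Finset β} {W : Finset V}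
    (hσ : (A : Set α).PairwiseDisjoint fun a => (σ a).leaves)
    (hτ : (B : Set β).PairwiseDisjoint fun b => (τ b).leaves)
    (hA : d * L ^ 6 ≤ #A * s) (hB : d * L ^ 6 ≤ #B * m)
    (hne : ∀ a ∈ A, ∀ b ∈ B, (σ a).centre ≠ (τ b).centre)
    (hσW : ∀ a ∈ A, (σ a).centre ∈ W) (hτW : ∀ b ∈ B, (τ b).centre ∈ W)
    (hW : #W ≤ d * L ^ 4 / 200) (hT : 8 * L ^ 2 ≤ T) (hT' : T ≤ 9 * L ^ 2) :
    ∃ P : StarPath σ τ (2 * T + 2), P.source ∈ A ∧ P.target ∈ B ∧ Disjoint P.inner W := by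
  obtain ⟨u, hu, v, hv, Q, hQ, hQW⟩ := exists_pathOn_of_card_ge hS.toScale hS.bipartite hS.expands
    (U := A.biUnion fun a => (σ a).leaves) (C := B.biUnion fun b => (τ b).leaves)
    (by rw [GraphStar.card_biUnion_leaves hσ]; exact_mod_cast hA)
    (by rw [GraphStar.card_biUnion_leaves hτ]; exact_mod_cast hB)
    (GraphStar.biUnion_leaves_subset hS.bipartite σ A)
    (GraphStar.biUnion_leaves_subset hS.bipartite τ B) hW hT hT'
  obtain ⟨a, ha, hua⟩ := mem_biUnion.1 hu
  obtain ⟨b, hb, hvb⟩ := mem_biUnion.1 hv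
  have haQ := disjoint_right.1 hQW (hσW a ha)
  have hbQ := disjoint_right.1 hQW (hτW b hb)
  refine ⟨⟨a, b, Q, ?_⟩, ha, hb, hQW⟩
  convert ((PathOn.refl (σ a).centre).join hQ (by simpa using haQ) ((σ a).adj u hua)).join
    (PathOn.refl (τ b).centre) (by simp [hbQ, (hne a ha b hb).symm]) ((τ b).adj v hvb).symm using 1
  · ring
  · grind

variable {t p : ℕ}

lemma exists_leg (hS : Setting G Y d L r) (hz : Sizes d L r T t m p s)
    {σ : Fin p → GraphStar G Y s}
    {τ : Fin (p * (3 * t) * (2 * T + 3) + t) → GraphStar G Y m}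
    (hσ : Pairwise (Function.onFun Disjoint fun i => (σ i).verts))
    (hτ : Pairwise (Function.onFun Disjoint fun i => (τ i).verts))
    (hστ : ∀ i j, Disjoint (σ i).verts (τ j).verts) (hZ : #Z ≤ 240 * (d * L ^ 2))
    {Z' : Finset V} (hZ' : #Z' ≤ p * (3 * t) * (2 * T + 3)) :
    ∃ P : StarPath σ τ (2 * T + 2), Disjoint P.inner Z ∧ (τ P.target).centre ∉ Z' ∧
      Disjoint P.inner Z' := by
  set B := ({b | (τ b).centre ∉ Z'} : Finset (Fin (p * (3 * t) * (2 * T + 3) + t)))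
  have hB : t ≤ #B := by
    have : Fintype.card _ ≤ #B + #Z' := GraphStar.card_le_card_centre_notMem_add hτ Z'
    rw [Fintype.card_fin] at this
    omega
  set W := Z ∪ (univ.image fun a => (σ a).centre) ∪ (univ.image fun b => (τ b).centre) ∪ Z'
  have hW : (#W : ℝ) ≤ d * L ^ 4 / 200 := by
    have hcard : #W ≤ #Z + p + (p * (3 * t) * (2 * T + 3) + t) + p * (3 * t) * (2 * T + 3) := by
      refine (card_union_le _ _).trans (add_le_add ?_ hZ')
      refine (card_union_le _ _).trans (add_le_add ?_ (card_image_le.trans_eq (by simp)))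
      exact (card_union_le _ _).trans (by gcongr; exact card_image_le.trans_eq (by simp))
    refine le_trans ?_ (hz.legs_le hS.toScale)
    calc (#W : ℝ)
        ≤ #Z + p + (p * (3 * t) * (2 * T + 3) + t) + p * (3 * t) * (2 * T + 3) := by
          exact_mod_cast hcard
      _ ≤ _ := by gcongr
  obtain ⟨P, -, hPB, hP⟩ := hS.exists_starPath (σ := σ) (τ := τ) (A := univ) (B := B) (W := W)
    (fun i _ j _ hij => GraphStar.pairwise_disjoint_leaves hσ hij)
    (fun i _ j _ hij => GraphStar.pairwise_disjoint_leaves hτ hij)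
    (by simpa using hz.core_leaves_ge hS.toScale)
    ((hz.leaves_ge hS.toScale).trans (by gcongr))
    (fun a _ b _ => disjoint_iff_ne.1 (hστ a b) _ (σ a).centre_mem_verts _ (τ b).centre_mem_verts)
    (fun a _ => by simp [W]) (fun b _ => by simp [W]) hW hz.le_T hz.T_le
  simp only [W, disjoint_union_right] at hP
  exact ⟨P, hP.1.1.1, (mem_filter.1 hPB).2, hP.2⟩

lemma exists_stars_pair (hS : Setting G Y d L r) (hz : Sizes d L r T t m p s)
    (hZ : #Z ≤ 240 * (d * L ^ 2)) :
    ∃ (σ : Fin p → GraphStar G Y s)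
      (τ : Fin (p * (3 * t) * (2 * T + 3) + t) → GraphStar G Y m),
      Pairwise (Function.onFun Disjoint fun i => (σ i).verts) ∧
      Pairwise (Function.onFun Disjoint fun i => (τ i).verts) ∧
      (∀ i j, Disjoint (σ i).verts (τ j).verts) ∧
      (∀ i, Disjoint (σ i).verts Z) ∧ ∀ j, Disjoint (τ j).verts Z := by
  have hlt := hz.stars_lt hS.toScale
  have hpos : (0 : ℝ) ≤ (p * (3 * t) * (2 * T + 3) + t) * (m + 1) := by positivity
  obtain ⟨σ, hσZ, hσ⟩ := hS.exists_stars (q := p) (Z := Z) hz.s_le (by linarith)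
  set X := univ.biUnion fun i => (σ i).verts
  have hX : (#X : ℝ) ≤ p * (s + 1) := by
    have := card_biUnion_le_card_mul univ (fun i => (σ i).verts) (s + 1)
      fun i _ => (σ i).card_verts_le
    rw [card_univ, Fintype.card_fin] at this
    exact_mod_cast this
  have hZX : (#(Z ∪ X) : ℝ) ≤ #Z + #X := by exact_mod_cast card_union_le Z X
  obtain ⟨τ, hτZ, hτ⟩ := hS.exists_stars (q := p * (3 * t) * (2 * T + 3) + t) (Z := Z ∪ X)
    (hz.m_le_div hS.toScale) (by push_cast; linarith)
  exact ⟨σ, τ, hσ, hτ, fun i j => (disjoint_union_right.1 (hτZ j)).2.symm.mono_left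
    (subset_biUnion_of_mem (fun i => (σ i).verts) (mem_univ i)), hσZ,
    fun j => (disjoint_union_right.1 (hτZ j)).1⟩

lemma exists_spider (hS : Setting G Y d L r) (hz : Sizes d L r T t m p s)
    (hZ : #Z ≤ 240 * (d * L ^ 2)) :
    ∃ S : Spider G Y (3 * t) (2 * T + 2) m, Disjoint S.verts Z := by
  obtain ⟨σ, τ, hσ, hτ, hστ, hσZ, hτZ⟩ := hS.exists_stars_pair hz hZ
  obtain ⟨P, hPZ, hP⟩ := exists_pairwise_disjoint (ι := Fin (p * (3 * t)))
    (Φ := fun P : StarPath σ τ (2 * T + 2) => Disjoint P.inner Z) StarPath.tail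
    (fun P _ => P.card_tail_le) fun Z' hZ' => by
      obtain ⟨P, hPZ, hPZ', hPZ''⟩ := hS.exists_leg hz hσ hτ hστ hZ (by simpa using hZ')
      exact ⟨P, hPZ, disjoint_insert_left.2 ⟨hPZ', hPZ''⟩⟩
  have hp : 0 < p := by
    have := hS.L_pos
    exact_mod_cast (show (0 : ℝ) < 2 * L ^ 7 by positivity).trans_le hz.le_p
  obtain ⟨a, -, ha⟩ := exists_le_card_fiber_of_mul_le_card_of_maps_to
    (s := univ) (t := univ) (f := fun i => (P i).source) (n := 3 * t) (by simp)
    (univ_nonempty_iff.2 ⟨⟨0, hp⟩⟩) (by simp)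
  set e := orderEmbOfCardLe _ ha
  have he : ∀ i, (P (e i)).source = a := fun i =>
    (mem_filter.1 (orderEmbOfCardLe_mem _ ha i)).2
  have htail : Pairwise (Function.onFun Disjoint fun i => (P (e i)).tail) := fun i j hij =>
    hP (e.injective.ne hij)
  have htarget : ∀ i j, i ≠ j → (P (e i)).target ≠ (P (e j)).target := fun i j hij h =>
    disjoint_left.1 (htail hij) (P (e i)).centre_mem_tail (h ▸ (P (e j)).centre_mem_tail)
  refine ⟨⟨(σ a).centre, fun i => (P (e i)).tail, fun i => τ (P (e i)).target,
    fun i => he i ▸ (P (e i)).pathOn, fun i => (P (e i)).centre_mem_tail, htail,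
    fun i j hij => GraphStar.pairwise_disjoint_leaves hτ (htarget i j hij)⟩, ?_⟩
  refine disjoint_insert_left.2 ⟨disjoint_left.1 (hσZ a) (σ a).centre_mem_verts,
    (disjoint_biUnion_left _ _ _).2 fun i _ => disjoint_insert_left.2 ⟨?_, hPZ (e i)⟩⟩
  exact disjoint_left.1 (hτZ _) (τ _).centre_mem_verts

lemma exists_spiders (hS : Setting G Y d L r) (hz : Sizes d L r T t m p s) :
    ∃ S : Fin t → Spider G Y (3 * t) (2 * T + 2) m,
      Pairwise (Function.onFun Disjoint fun i => (S i).verts) := by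
  suffices hext : ∀ Z, #Z ≤ Fintype.card (Fin t) * (3 * t * (2 * T + 2 + 1) + 1) →
      ∃ S : Spider G Y (3 * t) (2 * T + 2) m, True ∧ Disjoint S.verts Z by
    obtain ⟨S, -, hS⟩ := exists_pairwise_disjoint Spider.verts (fun S _ => S.card_verts_le) hext
    exact ⟨S, hS⟩
  intro Z hZ
  rw [Fintype.card_fin] at hZ
  obtain ⟨S, hSZ⟩ := hS.exists_spider hz (le_trans (by exact_mod_cast hZ)
    (hz.spiders_le hS.toScale))
  exact ⟨S, trivial, hSZ⟩

lemma exists_route (hS : Setting G Y d L r) (hz : Sizes d L r T t m p s)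
    {S : Fin t → Spider G Y (3 * t) (2 * T + 2) m}
    (hSd : Pairwise (Function.onFun Disjoint fun i => (S i).verts)) {i j : Fin t} (hij : i ≠ j)
    {used : Finset (Fin t × Fin (3 * t))} (hused : ∀ k, #{x ∈ used | x.1 = k} ≤ 2 * t)
    (hZ : #Z ≤ t * t * (2 * T + 3)) :
    ∃ P : StarPath (Spider.stars S) (Spider.stars S) (2 * T + 2), P.source.1 = i ∧
      P.target.1 = j ∧ Disjoint {P.source, P.target} used ∧
      (∀ k, Disjoint P.inner (S k).verts) ∧ Disjoint P.inner Z := by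
  set A : Fin t → Finset (Fin t × Fin (3 * t)) := fun k => {x | x.1 = k ∧ x ∉ used}
  have hmem : ∀ {k x}, x ∈ A k ↔ x.1 = k ∧ x ∉ used := by simp [A]
  have hcard : ∀ k, d * L ^ 6 ≤ #(A k) * m := fun k => by
    have : #(({k} : Finset (Fin t)) ×ˢ (univ : Finset (Fin (3 * t))))
        ≤ #(A k) + #{x ∈ used | x.1 = k} :=
      (card_le_card fun x hx => by grind).trans (card_union_le _ _)
    rw [card_product, card_singleton, card_fin] at this
    refine (hz.leaves_ge hS.toScale).trans ?_
    gcongr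
    linarith [hused k]
  have hdisj : ∀ k, (A k : Set _).PairwiseDisjoint fun x => (Spider.stars S x).leaves := fun k =>
    (Spider.pairwiseDisjoint_leaves S k).subset fun x hx => (hmem.1 hx).1
  set W := (univ.biUnion fun k => (S k).verts) ∪ Z
  have hW : (#W : ℝ) ≤ d * L ^ 4 / 200 := by
    have hspiders := card_biUnion_le_card_mul univ (fun k => (S k).verts)
      (3 * t * (2 * T + 3) + 1) fun k _ => (S k).card_verts_le
    rw [card_fin] at hspiders
    have : (#W : ℝ) ≤ t * (3 * t * (2 * T + 3) + 1) + t * t * (2 * T + 3) := by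
      exact_mod_cast (card_union_le _ _).trans (add_le_add hspiders hZ)
    linarith [hz.spiders_le hS.toScale, hz.routes_le hS.toScale]
  have hcentre : ∀ x, (Spider.stars S x).centre ∈ W := fun x =>
    mem_union_left _ (mem_biUnion.2 ⟨x.1, mem_univ _, Spider.centre_mem_verts S x⟩)
  obtain ⟨P, hPi, hPj, hP⟩ := hS.exists_starPath (hdisj i) (hdisj j) (hcard i) (hcard j)
    (fun x hx y hy => disjoint_iff_ne.1
      (hSd (by rw [(hmem.1 hx).1, (hmem.1 hy).1]; exact hij))
      _ (Spider.centre_mem_verts S x) _ (Spider.centre_mem_verts S y))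
    (fun x _ => hcentre x) (fun x _ => hcentre x) hW hz.le_T hz.T_le
  rw [hmem] at hPi hPj
  simp only [W, disjoint_union_right, disjoint_biUnion_right, mem_univ, true_imp_iff] at hP
  exact ⟨P, hPi.1, hPj.1, by simp [hPi.2, hPj.2], hP⟩

lemma exists_routes (hS : Setting G Y d L r) (hz : Sizes d L r T t m p s)
    {S : Fin t → Spider G Y (3 * t) (2 * T + 2) m}
    (hSd : Pairwise (Function.onFun Disjoint fun i => (S i).verts)) :
    ∃ P : Fin t × Fin t → StarPath (Spider.stars S) (Spider.stars S) (2 * T + 2),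
      (∀ e, e.1 < e.2 → ((P e).source.1 = e.1 ∧ (P e).target.1 = e.2) ∧
        ∀ k, Disjoint (P e).inner (S k).verts) ∧
      ∀ e e', e.1 < e.2 → e'.1 < e'.2 → e ≠ e' →
        Disjoint {(P e).source, (P e).target} ({(P e').source, (P e').target} : Finset _) ∧
          Disjoint (P e).inner (P e').inner := by
  have ht : 1 < t := by
    have hr := hS.r_ge
    exact_mod_cast (show (1 : ℝ) < r ^ 2 by nlinarith).trans_le hz.le_t
  obtain ⟨P₀, -⟩ := hS.exists_route hz hSd (i := ⟨0, by omega⟩) (j := ⟨1, ht⟩) (by simp)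
    (used := ∅) (Z := ∅) (by simp) (by simp)
  have : Nonempty (StarPath (Spider.stars S) (Spider.stars S) (2 * T + 2)) := ⟨P₀⟩
  obtain ⟨P, hP, hPP⟩ := exists_pairwise_of_extend ({e | e.1 < e.2} : Finset (Fin t × Fin t))
    (fun e (P : StarPath (Spider.stars S) (Spider.stars S) (2 * T + 2)) =>
      (P.source.1 = e.1 ∧ P.target.1 = e.2) ∧ ∀ k, Disjoint P.inner (S k).verts)
    (R := fun _ _ P Q => Disjoint {P.source, P.target} ({Q.source, Q.target} : Finset _) ∧
      Disjoint P.inner Q.inner)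
    (fun _ _ _ _ h => ⟨h.1.symm, h.2.symm⟩) fun s _ f hf e he _ => by
      obtain ⟨P, hPi, hPj, hP, hPS, hPZ⟩ := hS.exists_route hz hSd (mem_filter.1 he).2.ne
        (used := s.biUnion fun e => {(f e).source, (f e).target})
        (Z := s.biUnion fun e => (f e).inner)
        (card_filter_biUnion_ends_le fun e he => (hf e he).1)
        ((card_biUnion_le_card_mul s _ _ fun e _ => (f e).card_inner_le).trans
          (Nat.mul_le_mul_right _ ((card_le_univ s).trans_eq (by simp))))
      exact ⟨P, ⟨⟨hPi, hPj⟩, hPS⟩, fun e' he' =>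
        ⟨(disjoint_biUnion_right _ _ _).1 hP e' he', (disjoint_biUnion_right _ _ _).1 hPZ e' he'⟩⟩
  exact ⟨P, by simpa using hP, fun e e' he he' => hPP e (by simpa using he) e' (by simpa using he')⟩

theorem exists_hasTK (hS : Setting G Y d L r) : ∃ l, HasTK G ⌈r ^ 2⌉₊ l := by
  obtain ⟨T, m, p, s, hz⟩ := Sizes.exists_of_scale hS.toScale
  obtain ⟨S, hSd⟩ := hS.exists_spiders hz
  obtain ⟨P, hP, hPP⟩ := hS.exists_routes hz hSd
  have hl : 2 * T + 2 + (2 * T + 2) + (2 * T + 2) = 6 * T + 5 + 1 := by ring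
  refine ⟨6 * T + 5, hasTK_of_pathOn (b := fun i => (S i).core) (fun i j hij => ?_)
    (fun e => Spider.route S (P e)) (fun i j hij => ?_) (fun i j k hij hk => ?_)
    fun e e' he he' hne => ?_⟩
  · by_contra hne
    exact disjoint_iff_ne.1 (hSd hne) _ (S i).core_mem_verts _ (S j).core_mem_verts hij
  · obtain ⟨⟨hi, hj⟩, hPS⟩ := hP (i, j) hij
    have := Spider.pathOn_route hSd (by rw [hi, hj]; exact hij.ne) hPS
    rwa [hi, hj, hl] at this
  · obtain ⟨⟨hi, hj⟩, hPS⟩ := hP (i, j) hij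
    have := Spider.eq_of_core_mem_route hSd hPS hk
    rwa [hi, hj] at this
  · exact Spider.disjoint_route hSd (hP e he).2 (hP e' he').2 (hPP e e' he he' hne).1
      (hPP e e' he he' hne).2

end Setting

lemma Setting.exists_of_isBipartite (hG : IsBipartite G) (hs : Scale (Fintype.card V) d L r)
    (hE : Expands G d L) : ∃ Y, Setting G Y d L r := by
  obtain ⟨A, hA⟩ := hG
  have hcard : (A.ncard + Aᶜ.ncard : ℝ) = Fintype.card V := by
    exact_mod_cast (Set.ncard_add_ncard_compl A).trans Nat.card_eq_fintype_card
  obtain hle | hlt := le_or_gt ((Fintype.card V : ℝ) / 2) Aᶜ.ncard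
  · exact ⟨A, ⟨hs, hA, hE, hle⟩⟩
  · exact ⟨Aᶜ, ⟨hs, hA.compl, hE, by rw [compl_compl]; linarith⟩⟩

end Graph

/-! ### Robust expanders -/

section Expander

variable {V : Type*} {G : SimpleGraph V}

lemma ncard_edgeSet_between_le [DecidableRel G.Adj] (X Y : Finset V) :
    (G.between X Y).edgeSet.ncard ≤ #(G.interedges X Y) := by
  classical
  calc (G.between X Y).edgeSet.ncard
      ≤ Set.ncard (((G.interedges X Y).image fun e => s(e.1, e.2) : Finset (Sym2 V)) :
          Set (Sym2 V)) := by
        refine Set.ncard_le_ncard fun e he => ?_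
        induction e with
        | _ v w =>
          simp only [SimpleGraph.mem_edgeSet, SimpleGraph.between_adj, mem_coe] at he
          simp only [coe_image, Set.mem_image, mem_coe, G.mem_interedges_iff]
          obtain ⟨hvw, h | h⟩ := he
          · exact ⟨(v, w), ⟨h.1, h.2, hvw⟩, rfl⟩
          · exact ⟨(w, v), ⟨h.2, h.1, hvw.symm⟩, Sym2.eq_swap⟩
    _ ≤ #(G.interedges X Y) := by
        rw [Set.ncard_coe_finset]
        exact card_image_le

lemma extNbr_sdiff_between_subset [Fintype V] [DecidableEq V] (X Z : Finset V) :
    extNbr (G \ G.between X ((X ∪ Z)ᶜ : Finset V)) X ⊆ Z := by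
  rintro w ⟨hwX, v, hv, hvw⟩
  rw [SimpleGraph.sdiff_adj] at hvw
  by_contra hwZ
  exact hvw.2 (SimpleGraph.between_adj.2 ⟨hvw.1, .inl ⟨hv, by simp_all⟩⟩)

lemma IsExpander.expands [Fintype V] [DecidableEq V] [DecidableRel G.Adj] {eps k d L : ℝ}
    (hE : IsExpander G eps k) (hk : 0 < k) (hd : 0 ≤ d) (hG : d ≤ avgDeg G) (hL : 0 < L)
    (hkL : k ≤ 2 * (d * L)) (hlog : Real.log (15 * Fintype.card V / k) ^ 2 ≤ eps * L) :
    Expands G d L := by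
  intro X Z hX hXn hedges
  have hquot : 1 < 15 * #X / k := by rw [lt_div_iff₀ hk]; linarith
  have hlogX : Real.log (15 * #X / k) ≤ Real.log (15 * Fintype.card V / k) := by
    gcongr
    exact card_le_univ X
  have hfun : 1 / L ≤ epsFun eps k #X := by
    have hpos := Real.log_pos hquot
    rw [epsFun, if_neg (by linarith), div_le_div_iff₀ hL (by positivity), one_mul]
    exact (pow_le_pow_left₀ hpos.le hlogX 2).trans hlog
  have hF : ((G.between X ((X ∪ Z)ᶜ : Finset V)).edgeSet.ncard : ℝ)
      ≤ avgDeg G * epsFun eps k #X * #X :=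
    calc ((G.between X ((X ∪ Z)ᶜ : Finset V)).edgeSet.ncard : ℝ)
        ≤ #(G.interedges X (X ∪ Z)ᶜ) := by exact_mod_cast ncard_edgeSet_between_le X _
      _ ≤ d * (1 / L) * #X := hedges.trans_eq (by ring)
      _ ≤ avgDeg G * epsFun eps k #X * #X := by gcongr; linarith
  have hcard := hE X (by rw [Set.ncard_coe_finset]; linarith)
    (by rwa [Set.ncard_coe_finset, Nat.card_eq_fintype_card]) _ SimpleGraph.between_le
    (by rwa [Set.ncard_coe_finset])
  rw [Set.ncard_coe_finset] at hcard
  calc (#X : ℝ) / L = 1 / L * #X := by ring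
    _ ≤ epsFun eps k #X * #X := by gcongr
    _ ≤ ((extNbr (G \ G.between X ((X ∪ Z)ᶜ : Finset V)) X).ncard : ℝ) := hcard
    _ ≤ (Set.ncard (Z : Set V) : ℝ) := by
        exact_mod_cast Set.ncard_le_ncard (extNbr_sdiff_between_subset X Z)
    _ = #Z := by rw [Set.ncard_coe_finset]

end Expander

lemma Scale.of_log {n k : ℕ} {C d : ℝ} (hk : 240 ≤ k) (hd : 1 < d) (hC : 4 ≤ C)
    (hlog : 32 + C ≤ Real.log (n / d)) (hpow : C ^ 40 * Real.log (n / d) ^ 80 ≤ n / d)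
    (hlogd : Real.log n ^ k ≤ d) : Scale n d (C * Real.log (n / d) ^ 2) √√d := by
  set x : ℝ := n / d with hx
  have hx0 : 0 < x := by
    by_contra! h
    have := le_antisymm h (by positivity)
    rw [this, Real.log_zero] at hlog
    linarith
  have hnx : d * x = n := by rw [hx]; field_simp
  have hlogn : Real.log x ≤ Real.log n :=
    Real.log_le_log hx0 (hnx ▸ le_mul_of_one_le_left hx0.le hd.le)
  have hlogx : 0 ≤ Real.log x := by linarith
  have hr4 : d = √√d ^ 4 := by
    rw [show √√d ^ 4 = (√√d ^ 2) ^ 2 by ring, Real.sq_sqrt (by positivity),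
      Real.sq_sqrt (by linarith)]
  have hr : Real.log n ^ 60 ≤ √√d := by
    refine (pow_le_pow_iff_left₀ (by positivity) (by positivity) (by norm_num : 4 ≠ 0)).1 ?_
    rw [← hr4, ← pow_mul]
    exact (pow_le_pow_right₀ (by linarith) hk).trans hlogd
  constructor
  case d_eq => exact hr4
  case le_L => nlinarith
  case L_pow_le =>
    calc (C * Real.log x ^ 2) ^ 20 ≤ (Real.log n * Real.log n ^ 2) ^ 20 := by gcongr; linarith
      _ = Real.log n ^ 60 := by ring
      _ ≤ √√d := hr
  case log_le =>
    calc 4 * Real.log n ≤ Real.log n ^ 2 := by nlinarith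
      _ ≤ Real.log n ^ 60 := pow_le_pow_right₀ (by linarith) (by norm_num)
      _ ≤ √√d := hr
  case mul_le =>
    calc d * (C * Real.log x ^ 2) ^ 40 = d * (C ^ 40 * Real.log x ^ 80) := by ring
      _ ≤ d * x := by gcongr
      _ = n := hnx
  case le_exp =>
    calc (n : ℝ) = d * Real.exp (Real.log x) := by rw [Real.exp_log hx0, hnx]
      _ ≤ d * Real.exp (C * Real.log x ^ 2) := by gcongr; nlinarith

lemma exists_forall_log_pow_le (a b c : ℝ) (k : ℕ) :
    ∃ K₀ : ℝ, 0 < K₀ ∧ ∀ x, K₀ ≤ x → a ≤ x ∧ b ≤ Real.log x ∧ c * Real.log x ^ k ≤ x := by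
  have hpow := (Real.isLittleO_pow_log_id_atTop (n := k)).const_mul_left c |>.bound one_pos
  obtain ⟨K₀, hK₀⟩ := Filter.eventually_atTop.1 <| (Filter.eventually_ge_atTop (max a 0)).and <|
    (Real.tendsto_log_atTop.eventually_ge_atTop b).and hpow
  refine ⟨max K₀ 1, by positivity, fun x hx => ?_⟩
  obtain ⟨ha, hb, hc⟩ := hK₀ x ((le_max_left _ _).trans hx)
  rw [one_mul, id, Real.norm_of_nonneg ((le_max_right _ _).trans ha)] at hc
  exact ⟨(le_max_left _ _).trans ha, hb, (le_abs_self _).trans hc⟩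

lemma log_mul_div_sq_le {e x : ℝ} (he : 0 < e) (hx : 15 / e ≤ x) (hlog : e ≤ Real.log x) :
    Real.log (15 * x / e) ^ 2 ≤ 4 * Real.log x ^ 2 := by
  have hx0 : 0 < x := (by positivity : 0 < 15 / e).trans_le hx
  have hle : Real.log (15 * x / e) ≤ 2 * Real.log x :=
    calc Real.log (15 * x / e) = Real.log (15 / e) + Real.log x := by
          rw [← Real.log_mul (by positivity) hx0.ne']; ring_nf
      _ ≤ Real.log x + Real.log x := by gcongr
      _ = 2 * Real.log x := by ring
  have hnonneg : 0 ≤ Real.log (15 * x / e) :=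
    Real.log_nonneg <| (one_le_div he).2 <| by linarith [Real.log_le_self hx0.le]
  calc Real.log (15 * x / e) ^ 2 ≤ (2 * Real.log x) ^ 2 := by gcongr
    _ = 4 * Real.log x ^ 2 := by ring

lemma nonempty_of_mul_le_card {V : Type*} {K d : ℝ} (hK : 0 < K) (hV : K * d ≤ Nat.card V)
    (hd : 0 < d) : Nonempty V := by
  have : 0 < Nat.card V := by exact_mod_cast (mul_pos hK hd).trans_le hV
  exact (Nat.card_pos_iff.1 this).1

lemma minDegGe.le_avgDeg {V : Type*} [Finite V] {G : SimpleGraph V} {d : ℝ}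
    (hV : 0 < d → Nonempty V) (hG : minDegGe G d) : d ≤ avgDeg G := by
  have := Fintype.ofFinite V
  rw [avgDeg, finsum_eq_sum_of_fintype, Nat.card_eq_fintype_card]
  obtain hd | hd := le_or_gt d 0
  · exact hd.trans (by positivity)
  have := hV hd
  rw [le_div_iff₀ (by exact_mod_cast Fintype.card_pos), mul_comm, ← nsmul_eq_mul]
  exact card_nsmul_le_sum _ _ _ fun v _ => hG v

lemma hasTK_of_subsingleton {V : Type*} {G : SimpleGraph V} {t : ℕ} [Subsingleton (Fin t)]
    (b : Fin t → V) : HasTK G t 0 :=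
  have hlt {i j : Fin t} (h : i < j) : False := h.ne (Subsingleton.elim i j)
  ⟨_, b, Function.injective_of_subsingleton b, fun _ _ h => (hlt h).elim, fun _ _ h => (hlt h).elim,
    fun _ _ h => (hlt h).elim, fun _ _ h => (hlt h).elim, rfl⟩

lemma hasTK_of_le_one_s8 {V : Type*} {G : SimpleGraph V} {t : ℕ} (ht : t ≤ 1)
    (hV : t ≠ 0 → Nonempty V) : HasTK G t 0 := by
  have : Subsingleton (Fin t) := Fin.subsingleton_iff_le_one.2 ht
  have (i : Fin t) : Nonempty V := hV i.pos.ne'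
  exact hasTK_of_subsingleton fun i => (this i).some

lemma IsExpander.exists_hasTK {V : Type*} [Fintype V] {G : SimpleGraph V} {eps1 eps2 C d : ℝ}
    {k : ℕ} (hE : IsExpander G eps1 (eps2 * d)) (hB : IsBipartite G) (hG : d ≤ avgDeg G)
    (heps2 : 0 < eps2) (hC : 4 ≤ C) (hC' : 4 ≤ eps1 * C) (hd : 1 < d) (hk : 240 ≤ k)
    (hlogd : Real.log (Fintype.card V) ^ k ≤ d) (hx : 15 / eps2 ≤ Fintype.card V / d)
    (hlog : 32 + C + eps2 ≤ Real.log (Fintype.card V / d))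
    (hpow : C ^ 40 * Real.log (Fintype.card V / d) ^ 80 ≤ Fintype.card V / d) :
    ∃ l, HasTK G ⌈√d⌉₊ l := by
  classical
  have hs := Scale.of_log hk hd hC (by linarith) hpow hlogd
  set x : ℝ := Fintype.card V / d with hx_def
  have hL : eps2 ≤ 2 * (C * Real.log x ^ 2) := by nlinarith
  have hexp : Expands G d (C * Real.log x ^ 2) := by
    refine hE.expands (by positivity) (by linarith) hG hs.L_pos ?_ ?_
    · calc eps2 * d ≤ 2 * (C * Real.log x ^ 2) * d := by gcongr
        _ = 2 * (d * (C * Real.log x ^ 2)) := by ring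
    · calc Real.log (15 * Fintype.card V / (eps2 * d)) ^ 2 = Real.log (15 * x / eps2) ^ 2 := by
            rw [hx_def]; field_simp
        _ ≤ 4 * Real.log x ^ 2 := log_mul_div_sq_le heps2 hx (by linarith)
        _ ≤ eps1 * C * Real.log x ^ 2 := by gcongr
        _ = eps1 * (C * Real.log x ^ 2) := by ring
  obtain ⟨Y, hS⟩ := Setting.exists_of_isBipartite hB hs hexp
  simpa only [Real.sq_sqrt (Real.sqrt_nonneg d)] using hS.exists_hasTK

theorem statement_8_general.{u} {eps1 eps2 : ℝ} (heps1 : 0 < eps1) (heps2 : 0 < eps2) :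
    ∃ K₀ : ℝ, 0 < K₀ ∧ ∀ K : ℝ, K₀ ≤ K → ∀ k : ℕ, 240 ≤ k →
      ∀ (V : Type u) [Fintype V] (G : SimpleGraph V) (d : ℝ),
        IsBipartite G → IsExpander G eps1 (eps2 * d) → d ≤ avgDeg G →
        K * d ≤ (Nat.card V : ℝ) → Real.log (Nat.card V) ^ k ≤ d →
        ∃ l : ℕ, HasTK G ⌈√d⌉₊ l := by
  have hC : eps1 * (4 * (1 + 1 / eps1)) = 4 * eps1 + 4 := by field_simp
  set C := 4 * (1 + 1 / eps1)
  have hC4 : 4 ≤ C := by nlinarith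
  obtain ⟨K₀, hK₀, hlarge⟩ := exists_forall_log_pow_le (15 / eps2) (32 + C + eps2) (C ^ 40) 80
  refine ⟨K₀, hK₀, fun K hK k hk V _ G d hB hE hG hKd hlog => ?_⟩
  obtain hd | hd := le_or_gt d 1
  · refine ⟨0, hasTK_of_le_one_s8 (by simpa using hd) fun ht => ?_⟩
    exact nonempty_of_mul_le_card (hK₀.trans_le hK) hKd (by simpa using ht)
  rw [Nat.card_eq_fintype_card] at hKd hlog
  obtain ⟨hx, hlogx, hpow⟩ := hlarge (Fintype.card V / d)
    (hK.trans ((le_div_iff₀ (by linarith)).2 hKd))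
  exact hE.exists_hasTK hB hG heps2 hC4 (by linarith) hd hk hlog hx hlogx hpow

theorem statement_8 (eps1 eps2 : Real)
    (heps1 : 0 < eps1) (heps1' : eps1 < 1) (heps2 : 0 < eps2) (heps2' : eps2 < 1) :
    ∃ K₀ : Real, ∀ K : Real, K₀ ≤ K →
      ∀ (V : Type) [Fintype V] (G : SimpleGraph V) (n : Nat) (d : Real),
        Nat.card V = n → IsBipartite G → IsExpander G eps1 (eps2 * d) → minDegGe G d →
        K * d ≤ (n : Real) → Real.log n ^ 800 ≤ d →
        ∃ l : Nat, HasTK G ⌈Real.sqrt d⌉₊ l := by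
  obtain ⟨K₀, hK₀, h⟩ := statement_8_general heps1 heps2
  refine ⟨K₀, fun K hK V _ G n d hn hB hE hG hKd hlog => ?_⟩
  subst hn
  exact h K hK 800 (by norm_num) V G d hB hE
    (hG.le_avgDeg (nonempty_of_mul_le_card (hK₀.trans_le hK) hKd)) hKd hlog
end
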